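/- Let 0 < c, c₁, c₂ < 1 and B ∈ ℝ, let D > 0, let g : [2,∞) → [0,∞), and suppose f : ℝ → [0,∞) is measurable and for every ε > 0 there is a constant C_ε with f(t) ≤ C_ε(1+|t|)^ε for all t ∈ ℝ. Then for every ε > 0 there exists a constant C > 0 such that: for every T ≥ 2 with the property that |∫_{−∞}^{∞} (sin(κu)/u)² f(u) du − (π/2)·κ·(log(1/κ) + B)| ≤ D·κ^{1+c}·g(T) for all κ with T^{−(1+c₁)} ≤ κ ≤ T^{−(1−c₂)}, one has |∫_{−T}^{T} f(t) dt − T(log T + A)| ≤ C·((T³ g(T))^{1/(3+c)+ε} + T^{1−2c₁+ε} + T^{1−c₂/4+ε}), where A = B − 2 + γ₀ + log 2. -/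

import Mathlib

open Real MeasureTheory

/-!
The density `(log |u| + B - 1 + γ₀ + log 2) / 2` has Fejér transform exactly
`π / 2 * κ * (log (1 / κ) + B)` and integral `T (log T + A)` over `[-T, T]`, so after subtracting it
from `f` one has to bound the integral over `[-T, T]` of a signed function `h` of subpolynomial
growth whose Fejér transform `F` is small for `T ^ (-(1 + c₁)) ≤ κ ≤ T ^ (-(1 - c₂))`.

Since `∂²/∂κ² (sin (κ u) / u) ^ 2 = 2 cos (2 κ u)`, integrating a Gaussian wave in `κ` by parts
twice writes the Gaussian means of `h` at scale `s` as integrals of `F` against a second derivative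
of Gaussian decay in `s κ`. Replacing `h` by its means costs `s T ^ δ`. In the integral of `F` the
small `κ` are handled by the growth of `h`, the middle range by hypothesis and the large `κ` by the
Gaussian factor; the result follows by balancing `s`.
-/

section

open Set Filter

section Growth

lemma integrable_one_add_abs_rpow_div_one_add_sq {δ : ℝ} (hδ : δ < 1) :
    Integrable fun u : ℝ ↦ (1 + |u|) ^ δ / (1 + u ^ 2) := by
  have hint : Integrable fun u : ℝ ↦ (1 + ‖u‖) ^ (-(2 - δ)) :=
    integrable_one_add_norm (by rw [Module.finrank_self]; push_cast; linarith)
  refine (hint.const_mul 2).mono' (Measurable.aestronglyMeasurable (by fun_prop))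
    (.of_forall fun u ↦ ?_)
  have hpos : 0 < 1 + |u| := by positivity
  rw [norm_of_nonneg (by positivity), norm_eq_abs, neg_sub, rpow_sub hpos, rpow_two,
    ← mul_div_assoc, mul_comm 2, mul_div_assoc, div_eq_mul_one_div]
  refine mul_le_mul_of_nonneg_left ?_ (by positivity)
  rw [div_le_div_iff₀ (by positivity) (by positivity)]
  nlinarith [sq_nonneg (1 - |u|), sq_abs u]

/-- `h` is measurable and at most `C (1 + |u|) ^ δ`, with `0 ≤ δ < 1`, up to an integrable
error `ℓ`, which absorbs local singularities such as that of the logarithm. -/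
structure PowerBound (h : ℝ → ℝ) (C δ : ℝ) (ℓ : ℝ → ℝ) : Prop where
  measurable : Measurable h
  const_nonneg : 0 ≤ C
  exponent_nonneg : 0 ≤ δ
  exponent_lt_one : δ < 1
  integrable_error : Integrable ℓ
  error_nonneg : ∀ u, 0 ≤ ℓ u
  abs_le : ∀ u, |h u| ≤ C * (1 + |u|) ^ δ + ℓ u

namespace PowerBound

variable {h h₁ h₂ ℓ ℓ₁ ℓ₂ : ℝ → ℝ} {C C₁ C₂ δ : ℝ}

lemma sub (hb₁ : PowerBound h₁ C₁ δ ℓ₁) (hb₂ : PowerBound h₂ C₂ δ ℓ₂) :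
    PowerBound (fun u ↦ h₁ u - h₂ u) (C₁ + C₂) δ (fun u ↦ ℓ₁ u + ℓ₂ u) where
  measurable := hb₁.measurable.sub hb₂.measurable
  const_nonneg := add_nonneg hb₁.const_nonneg hb₂.const_nonneg
  exponent_nonneg := hb₁.exponent_nonneg
  exponent_lt_one := hb₁.exponent_lt_one
  integrable_error := hb₁.integrable_error.add hb₂.integrable_error
  error_nonneg u := add_nonneg (hb₁.error_nonneg u) (hb₂.error_nonneg u)
  abs_le u := by
    have := abs_sub (h₁ u) (h₂ u)
    linarith [hb₁.abs_le u, hb₂.abs_le u]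

lemma of_forall_abs_le (hh : Measurable h) (hδ₀ : 0 ≤ δ) (hδ₁ : δ < 1)
    (hbound : ∀ u, |h u| ≤ C * (1 + |u|) ^ δ) : PowerBound h C δ 0 where
  measurable := hh
  const_nonneg := by simpa using (abs_nonneg _).trans (hbound 0)
  exponent_nonneg := hδ₀
  exponent_lt_one := hδ₁
  integrable_error := integrable_zero _ _ _
  error_nonneg _ := le_rfl
  abs_le u := by simpa using hbound u

lemma integral_error_nonneg (hb : PowerBound h C δ ℓ) : 0 ≤ ∫ u, ℓ u :=
  integral_nonneg hb.error_nonneg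

lemma integrable_div_one_add_sq (hb : PowerBound h C δ ℓ) :
    Integrable fun u ↦ h u / (1 + u ^ 2) := by
  have hpow := (integrable_one_add_abs_rpow_div_one_add_sq hb.exponent_lt_one).const_mul C
  refine (hpow.add hb.integrable_error).mono'
    (hb.measurable.div (by fun_prop)).aestronglyMeasurable (.of_forall fun u ↦ ?_)
  rw [norm_div, norm_of_nonneg (show (0 : ℝ) ≤ 1 + u ^ 2 by positivity), norm_eq_abs]
  calc |h u| / (1 + u ^ 2) ≤ (C * (1 + |u|) ^ δ + ℓ u) / (1 + u ^ 2) := by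
        gcongr; exact hb.abs_le u
    _ = C * ((1 + |u|) ^ δ / (1 + u ^ 2)) + ℓ u / (1 + u ^ 2) := by ring
    _ ≤ C * ((1 + |u|) ^ δ / (1 + u ^ 2)) + ℓ u := by
      gcongr
      exact div_le_self (hb.error_nonneg u) (le_add_of_nonneg_right (sq_nonneg u))

end PowerBound

/-- The part of `|log|` on `[-1, 1]`, where the logarithm is not dominated by a power of
`1 + |u|`. -/
noncomputable def localLog : ℝ → ℝ := indicator (Icc (-1) 1) fun u ↦ |log u|

lemma localLog_nonneg (u : ℝ) : 0 ≤ localLog u :=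
  indicator_nonneg (fun _ _ ↦ abs_nonneg _) _

lemma integrable_localLog : Integrable localLog := by
  have hlog : IntervalIntegrable log volume (-1) 1 := intervalIntegral.intervalIntegrable_log'
  rw [intervalIntegrable_iff_integrableOn_Icc_of_le (by norm_num)] at hlog
  exact IntegrableOn.integrable_indicator hlog.norm measurableSet_Icc

lemma abs_log_le_rpow_div_add_localLog {δ : ℝ} (hδ : 0 < δ) (u : ℝ) :
    |log u| ≤ (1 + |u|) ^ δ / δ + localLog u := by
  by_cases hu : u ∈ Icc (-1) 1
  · rw [localLog, indicator_of_mem hu]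
    exact le_add_of_nonneg_left (by positivity)
  · have hu' : 1 ≤ |u| := by
      by_contra! hlt
      exact hu (abs_le.1 hlt.le)
    calc |log u| = log |u| := by rw [← log_abs u, abs_of_nonneg (log_nonneg hu')]
      _ ≤ |u| ^ δ / δ := log_le_rpow_div (abs_nonneg u) hδ
      _ ≤ (1 + |u|) ^ δ / δ := by gcongr; linarith
      _ ≤ _ := le_add_of_nonneg_right (localLog_nonneg u)

lemma powerBound_log {δ : ℝ} (hδ₀ : 0 < δ) (hδ₁ : δ < 1) :
    PowerBound log (1 / δ) δ localLog where
  measurable := measurable_log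
  const_nonneg := by positivity
  exponent_nonneg := hδ₀.le
  exponent_lt_one := hδ₁
  integrable_error := integrable_localLog
  error_nonneg := localLog_nonneg
  abs_le u := by
    have := abs_log_le_rpow_div_add_localLog hδ₀ u
    rwa [div_eq_mul_one_div, mul_comm] at this

end Growth

section FejerKernel

/-- The kernel `(sin (κ u) / u) ^ 2`, written with `sinc` so that its value at `u = 0` is
`κ ^ 2`. -/
noncomputable def fejerKernel (κ u : ℝ) : ℝ := (κ * sinc (κ * u)) ^ 2

/-- The integral of `h` against the kernel `(sin (κ u) / u) ^ 2`, as a function of `κ`. -/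
noncomputable def fejerTransform (h : ℝ → ℝ) (κ : ℝ) : ℝ := ∫ u, fejerKernel κ u * h u

lemma fejerKernel_of_ne_zero (κ : ℝ) {u : ℝ} (hu : u ≠ 0) :
    fejerKernel κ u = (sin (κ * u) / u) ^ 2 := by
  rcases eq_or_ne κ 0 with rfl | hκ
  · simp [fejerKernel]
  · rw [fejerKernel, sinc_of_ne_zero (mul_ne_zero hκ hu)]
    field_simp

lemma fejerKernel_eq_ite (κ u : ℝ) :
    fejerKernel κ u = if u = 0 then κ ^ 2 else (sin (κ * u) / u) ^ 2 := by
  split_ifs with hu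
  · simp [fejerKernel, hu]
  · exact fejerKernel_of_ne_zero κ hu

@[fun_prop]
lemma continuous_fejerKernel : Continuous fun p : ℝ × ℝ ↦ fejerKernel p.1 p.2 := by
  unfold fejerKernel
  exact (continuous_fst.mul (continuous_sinc.comp (by fun_prop))).pow 2

lemma fejerKernel_nonneg (κ u : ℝ) : 0 ≤ fejerKernel κ u := sq_nonneg _

lemma fejerKernel_le_sq (κ u : ℝ) : fejerKernel κ u ≤ κ ^ 2 := by
  rw [fejerKernel, mul_pow]
  exact mul_le_of_le_one_right (sq_nonneg κ) ((sq_le_one_iff_abs_le_one _).2 (abs_sinc_le_one _))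

lemma sinc_sq_le_two_div_one_add_sq (v : ℝ) : sinc v ^ 2 ≤ 2 / (1 + v ^ 2) := by
  have hone : sinc v ^ 2 ≤ 1 := (sq_le_one_iff_abs_le_one _).2 (abs_sinc_le_one v)
  have hsin : sinc v ^ 2 * v ^ 2 ≤ 1 := by
    rcases eq_or_ne v 0 with rfl | hv
    · simp
    · rw [sinc_of_ne_zero hv, ← mul_pow, div_mul_cancel₀ _ hv]
      exact sin_sq_le_one v
  rw [le_div_iff₀ (by positivity)]
  linarith

lemma fejerKernel_le_div_one_add_mul_sq (κ u : ℝ) :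
    fejerKernel κ u ≤ κ ^ 2 * (2 / (1 + (κ * u) ^ 2)) := by
  rw [fejerKernel, mul_pow]
  gcongr
  exact sinc_sq_le_two_div_one_add_sq _

lemma fejerKernel_le_div_one_add_sq (κ u : ℝ) :
    fejerKernel κ u ≤ 2 * (1 + κ ^ 2) / (1 + u ^ 2) := by
  refine (fejerKernel_le_div_one_add_mul_sq κ u).trans ?_
  rw [← mul_div_assoc, div_le_div_iff₀ (by positivity) (by positivity)]
  nlinarith [sq_nonneg (κ ^ 2 * u)]

variable {h : ℝ → ℝ}

lemma abs_fejerKernel_mul_le (h : ℝ → ℝ) (κ u : ℝ) :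
    |fejerKernel κ u * h u| ≤ 2 * (1 + κ ^ 2) * |h u / (1 + u ^ 2)| := by
  rw [abs_mul, abs_of_nonneg (fejerKernel_nonneg κ u), abs_div,
    abs_of_nonneg (show (0 : ℝ) ≤ 1 + u ^ 2 by positivity), ← mul_div_assoc, ← div_mul_eq_mul_div]
  gcongr
  exact fejerKernel_le_div_one_add_sq κ u

lemma integrable_fejerKernel_mul (hh : Measurable h)
    (hint : Integrable fun u ↦ h u / (1 + u ^ 2)) (κ : ℝ) :
    Integrable fun u ↦ fejerKernel κ u * h u :=
  (hint.norm.const_mul (2 * (1 + κ ^ 2))).mono'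
    ((continuous_fejerKernel.comp (by fun_prop : Continuous fun u : ℝ ↦ (κ, u))).measurable.mul
      hh).aestronglyMeasurable
    (.of_forall (abs_fejerKernel_mul_le h κ))

lemma fejerTransform_neg (h : ℝ → ℝ) (κ : ℝ) : fejerTransform h (-κ) = fejerTransform h κ := by
  simp [fejerTransform, fejerKernel]

lemma measurable_fejerTransform (hh : Measurable h) : Measurable (fejerTransform h) := by
  have : StronglyMeasurable fun p : ℝ × ℝ ↦ fejerKernel p.1 p.2 * h p.2 :=
    (continuous_fejerKernel.measurable.mul (hh.comp measurable_snd)).stronglyMeasurable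
  exact this.integral_prod_right.measurable

lemma abs_fejerTransform_le_mul_one_add_sq (hint : Integrable fun u ↦ h u / (1 + u ^ 2)) (κ : ℝ) :
    |fejerTransform h κ| ≤ 2 * (∫ u, |h u / (1 + u ^ 2)|) * (1 + κ ^ 2) := by
  have hle := norm_integral_le_of_norm_le (f := fun u ↦ fejerKernel κ u * h u)
    (hint.abs.const_mul (2 * (1 + κ ^ 2))) (.of_forall (abs_fejerKernel_mul_le h κ))
  rw [integral_const_mul] at hle
  exact hle.trans_eq (by ring)

lemma fejerTransform_sub {h₁ h₂ : ℝ → ℝ} (hh₁ : Measurable h₁) (hh₂ : Measurable h₂)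
    (hint₁ : Integrable fun u ↦ h₁ u / (1 + u ^ 2)) (hint₂ : Integrable fun u ↦ h₂ u / (1 + u ^ 2))
    (κ : ℝ) :
    fejerTransform (fun u ↦ h₁ u - h₂ u) κ = fejerTransform h₁ κ - fejerTransform h₂ κ := by
  simp only [fejerTransform, mul_sub]
  exact integral_sub (integrable_fejerKernel_mul hh₁ hint₁ κ)
    (integrable_fejerKernel_mul hh₂ hint₂ κ)

end FejerKernel

section LaplaceTransforms

lemma integrableOn_cos_mul_exp_neg (a : ℝ) {t : ℝ} (ht : 0 < t) :
    IntegrableOn (fun v ↦ cos (a * v) * exp (-(t * v))) (Ioi 0) := by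
  have hexp : IntegrableOn (fun v ↦ exp (-t * v)) (Ioi 0) :=
    integrableOn_exp_mul_Ioi (neg_lt_zero.2 ht) 0
  simp only [neg_mul] at hexp
  exact hexp.bdd_mul (Continuous.aestronglyMeasurable (by fun_prop))
    (.of_forall fun v ↦ abs_cos_le_one (a * v))

lemma integral_cos_mul_exp_neg_Ioi (a : ℝ) {t : ℝ} (ht : 0 < t) :
    ∫ v in Ioi (0 : ℝ), cos (a * v) * exp (-(t * v)) = t / (t ^ 2 + a ^ 2) := by
  set z : ℂ := -t + a * Complex.I with hz
  have hre : z.re = -t := by simp [hz]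
  have him : z.im = a := by simp [hz]
  have hneg : z.re < 0 := by linarith
  have hcos (v : ℝ) : cos (a * v) * exp (-(t * v)) = RCLike.re (Complex.exp (z * v)) := by
    simp [hz, Complex.exp_re, mul_comm]
  simp only [hcos]
  rw [integral_re (integrableOn_exp_mul_complex_Ioi hneg 0), integral_exp_mul_complex_Ioi hneg,
    Complex.ofReal_zero, mul_zero, Complex.exp_zero, RCLike.re_to_complex, neg_div, one_div,
    Complex.neg_re, Complex.inv_re, Complex.normSq_apply, hre, him]
  ring

lemma integrableOn_sin_sq_mul_exp_neg {x : ℝ} (hx : 0 < x) :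
    IntegrableOn (fun v ↦ sin v ^ 2 * exp (-(2 * x * v))) (Ioi 0) := by
  have hexp : IntegrableOn (fun v ↦ exp (-(2 * x) * v)) (Ioi 0) :=
    integrableOn_exp_mul_Ioi (by linarith) 0
  simp only [neg_mul] at hexp
  refine hexp.bdd_mul (c := 1) (Continuous.aestronglyMeasurable (by fun_prop))
    (.of_forall fun v ↦ ?_)
  rw [norm_of_nonneg (sq_nonneg _)]
  exact sin_sq_le_one v

lemma integral_sin_sq_mul_exp_neg_Ioi {x : ℝ} (hx : 0 < x) :
    ∫ v in Ioi (0 : ℝ), sin v ^ 2 * exp (-(2 * x * v)) = 1 / (4 * x * (1 + x ^ 2)) := by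
  have h2x : 0 < 2 * x := by positivity
  have hsq (v : ℝ) : sin v ^ 2 * exp (-(2 * x * v)) =
      1 / 2 * (cos (0 * v) * exp (-(2 * x * v)) - cos (2 * v) * exp (-(2 * x * v))) := by
    rw [sin_sq_eq_half_sub, zero_mul, cos_zero]
    ring
  simp only [hsq]
  rw [integral_const_mul, integral_sub (integrableOn_cos_mul_exp_neg 0 h2x)
    (integrableOn_cos_mul_exp_neg 2 h2x), integral_cos_mul_exp_neg_Ioi 0 h2x,
    integral_cos_mul_exp_neg_Ioi 2 h2x]
  field_simp
  ring

lemma integral_mul_exp_neg_mul_Ioi {r : ℝ} (hr : 0 < r) :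
    ∫ x in Ioi (0 : ℝ), x * exp (-(r * x)) = 1 / r ^ 2 := by
  have hgamma := integral_rpow_mul_exp_neg_mul_Ioi two_pos hr
  norm_num at hgamma
  rw [one_div, ← hgamma]

lemma integrableOn_mul_exp_neg_mul {r : ℝ} (hr : 0 < r) :
    IntegrableOn (fun x ↦ x * exp (-(r * x))) (Ioi 0) :=
  Integrable.of_integral_ne_zero (by rw [integral_mul_exp_neg_mul_Ioi hr]; positivity)

lemma integral_mul_log_mul_exp_neg_Ioi :
    ∫ x in Ioi (0 : ℝ), x * log x * exp (-x) = 1 - eulerMascheroniConstant := by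
  have hGamma : Complex.Gamma =ᶠ[nhds 2] Complex.GammaIntegral := by
    have : {z : ℂ | 0 < z.re} ∈ nhds (2 : ℂ) :=
      (isOpen_lt continuous_const Complex.continuous_re).mem_nhds (by norm_num)
    filter_upwards [this] with z hz using Complex.Gamma_eq_integral hz
  have hderiv := Complex.hasDerivAt_Gamma_nat 1
  norm_num at hderiv
  have heq := ((Complex.hasDerivAt_GammaIntegral (s := 2) (by norm_num)).congr_of_eventuallyEq
    hGamma).unique hderiv
  have hreal (x : ℝ) : (x : ℂ) ^ ((2 : ℂ) - 1) * (log x * exp (-x)) =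
      ((x * log x * exp (-x) : ℝ) : ℂ) := by
    rw [show (2 : ℂ) - 1 = 1 by norm_num, Complex.cpow_one]
    push_cast
    ring
  simp only [hreal] at heq
  rw [integral_complex_ofReal, neg_add_eq_sub] at heq
  exact_mod_cast heq

lemma integrableOn_mul_log_mul_exp_neg :
    IntegrableOn (fun x ↦ x * log x * exp (-x)) (Ioi 0) :=
  Integrable.of_integral_ne_zero (by
    rw [integral_mul_log_mul_exp_neg_Ioi]
    linarith [eulerMascheroniConstant_lt_two_thirds])

lemma integral_log_mul_mul_exp_neg_mul_Ioi {r : ℝ} (hr : 0 < r) :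
    ∫ x in Ioi (0 : ℝ), log x * (x * exp (-(r * x))) =
      (1 - eulerMascheroniConstant - log r) / r ^ 2 := by
  have hscaled := integral_comp_mul_left_Ioi (fun x ↦ x * log x * exp (-x)) 0 hr
  rw [mul_zero, integral_mul_log_mul_exp_neg_Ioi] at hscaled
  have hint := (integrableOn_Ioi_comp_mul_left_iff (fun x ↦ x * log x * exp (-x)) 0 hr).2
    (by rw [mul_zero]; exact integrableOn_mul_log_mul_exp_neg)
  calc ∫ x in Ioi (0 : ℝ), log x * (x * exp (-(r * x)))
      = ∫ x in Ioi (0 : ℝ), (r⁻¹ * (r * x * log (r * x) * exp (-(r * x))) -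
          log r * (x * exp (-(r * x)))) := by
        refine setIntegral_congr_fun measurableSet_Ioi fun x (hx : 0 < x) ↦ ?_
        rw [log_mul hr.ne' hx.ne']
        field_simp
        ring
    _ = _ := by
        rw [integral_sub (hint.const_mul _) ((integrableOn_mul_exp_neg_mul hr).const_mul _),
          integral_const_mul, integral_const_mul, integral_mul_exp_neg_mul_Ioi hr, hscaled,
          smul_eq_mul]
        field_simp

end LaplaceTransforms

section SincIntegrals

lemma integrable_log_div_one_add_sq : Integrable fun u ↦ log u / (1 + u ^ 2) :=
  (powerBound_log one_half_pos one_half_lt_one).integrable_div_one_add_sq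

lemma integral_log_div_one_add_sq_Ioi : ∫ x in Ioi (0 : ℝ), log x / (1 + x ^ 2) = 0 := by
  have hinv := integral_comp_rpow_Ioi (fun x : ℝ ↦ log x / (1 + x ^ 2)) (p := -1) (by norm_num)
  have hodd : ∫ x in Ioi (0 : ℝ), (|(-1 : ℝ)| * x ^ ((-1 : ℝ) - 1)) •
      (log (x ^ (-1 : ℝ)) / (1 + (x ^ (-1 : ℝ)) ^ 2)) =
      ∫ x in Ioi (0 : ℝ), -(log x / (1 + x ^ 2)) := by
    refine setIntegral_congr_fun measurableSet_Ioi fun x (hx : 0 < x) ↦ ?_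
    simp only [smul_eq_mul]
    rw [rpow_neg_one, log_inv, rpow_sub_one hx.ne', rpow_neg_one, abs_neg, abs_one]
    field_simp
    ring
  rw [hodd, integral_neg] at hinv
  linarith

variable {w : ℝ → ℝ}

-- For `w = 1` and `w = log` the inner Laplace integral `∫ x, w x * (4 * (x * exp (-(2 * v * x))))`
-- is `1 / v ^ 2` times `1` and times an affine function of `log v`.
lemma integrable_sin_sq_mul_laplace (hw : Measurable w)
    (hint : IntegrableOn (fun x ↦ w x / (1 + x ^ 2)) (Ioi 0)) :
    Integrable (fun p : ℝ × ℝ ↦ sin p.1 ^ 2 * (w p.2 * (4 * (p.2 * exp (-(2 * p.1 * p.2))))))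
      ((volume.restrict (Ioi 0)).prod (volume.restrict (Ioi 0))) := by
  have hslice (v x : ℝ) : sin v ^ 2 * (w x * (4 * (x * exp (-(2 * v * x))))) =
      w x * 4 * x * (sin v ^ 2 * exp (-(2 * x * v))) := by
    rw [mul_right_comm 2 v x]
    ring
  rw [integrable_prod_iff' (Measurable.aestronglyMeasurable (by fun_prop))]
  simp only [hslice]
  refine ⟨?_, hint.norm.congr ?_⟩ <;>
    filter_upwards [ae_restrict_mem measurableSet_Ioi] with x (hx : 0 < x)
  · exact (integrableOn_sin_sq_mul_exp_neg hx).const_mul _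
  · have hnorm (v : ℝ) : ‖w x * 4 * x * (sin v ^ 2 * exp (-(2 * x * v)))‖ =
        |w x| * 4 * x * (sin v ^ 2 * exp (-(2 * x * v))) := by
      rw [norm_mul, norm_mul, norm_mul, norm_of_nonneg hx.le, norm_of_nonneg zero_le_four,
        norm_of_nonneg (show 0 ≤ sin v ^ 2 * exp (-(2 * x * v)) by positivity), norm_eq_abs]
    simp only [hnorm]
    rw [integral_const_mul, integral_sin_sq_mul_exp_neg_Ioi hx, norm_div, norm_eq_abs,
      norm_of_nonneg (by positivity)]
    field_simp

lemma integral_sin_sq_mul_laplace (hw : Measurable w)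
    (hint : IntegrableOn (fun x ↦ w x / (1 + x ^ 2)) (Ioi 0)) :
    ∫ v in Ioi (0 : ℝ), sin v ^ 2 * ∫ x in Ioi (0 : ℝ), w x * (4 * (x * exp (-(2 * v * x)))) =
      ∫ x in Ioi (0 : ℝ), w x / (1 + x ^ 2) := by
  simp only [← integral_const_mul]
  rw [integral_integral_swap (integrable_sin_sq_mul_laplace hw hint)]
  refine setIntegral_congr_fun measurableSet_Ioi fun x (hx : 0 < x) ↦ ?_
  calc ∫ v in Ioi (0 : ℝ), sin v ^ 2 * (w x * (4 * (x * exp (-(2 * v * x)))))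
      = ∫ v in Ioi (0 : ℝ), w x * 4 * x * (sin v ^ 2 * exp (-(2 * x * v))) := by
        congr! 2 with v
        rw [mul_right_comm 2 v x]
        ring
    _ = w x / (1 + x ^ 2) := by
        rw [integral_const_mul, integral_sin_sq_mul_exp_neg_Ioi hx]
        field_simp

lemma integral_sinc_sq_Ioi : ∫ v in Ioi (0 : ℝ), sinc v ^ 2 = π / 2 := by
  have hint : IntegrableOn (fun x : ℝ ↦ 1 / (1 + x ^ 2)) (Ioi 0) := by
    simpa only [one_div] using integrable_inv_one_add_sq.integrableOn
  have hlaplace := integral_sin_sq_mul_laplace measurable_const hint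
  simp only [one_div] at hlaplace
  rw [integral_Ioi_inv_one_add_sq, arctan_zero, sub_zero] at hlaplace
  rw [← hlaplace]
  refine setIntegral_congr_fun measurableSet_Ioi fun v (hv : 0 < v) ↦ ?_
  simp only [one_mul]
  rw [integral_const_mul, integral_mul_exp_neg_mul_Ioi (by positivity), sinc_of_ne_zero hv.ne']
  field_simp
  ring

lemma integrable_sinc_sq_mul {h : ℝ → ℝ} (hh : Measurable h)
    (hint : Integrable fun u ↦ h u / (1 + u ^ 2)) : Integrable fun v ↦ sinc v ^ 2 * h v := by
  simpa [fejerKernel] using integrable_fejerKernel_mul hh hint 1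

lemma integrable_sinc_sq : Integrable fun v ↦ sinc v ^ 2 := by
  simpa using integrable_sinc_sq_mul (h := fun _ ↦ 1) measurable_const
    (by simpa only [one_div] using integrable_inv_one_add_sq)

lemma integral_sinc_sq_mul_log_Ioi :
    ∫ v in Ioi (0 : ℝ), sinc v ^ 2 * log v = π / 2 * (1 - eulerMascheroniConstant - log 2) := by
  have hlaplace := integral_sin_sq_mul_laplace measurable_log
    integrable_log_div_one_add_sq.integrableOn
  rw [integral_log_div_one_add_sq_Ioi] at hlaplace
  have hsinc : ∫ v in Ioi (0 : ℝ), ((1 - eulerMascheroniConstant - log 2) * sinc v ^ 2 -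
      sinc v ^ 2 * log v) = 0 := by
    refine Eq.trans ?_ hlaplace
    refine setIntegral_congr_fun measurableSet_Ioi fun v (hv : 0 < v) ↦ ?_
    simp only [mul_left_comm _ (4 : ℝ), integral_const_mul]
    rw [integral_log_mul_mul_exp_neg_mul_Ioi (by positivity),
      log_mul two_ne_zero hv.ne', sinc_of_ne_zero hv.ne']
    field_simp
    ring
  have hint := integrable_sinc_sq_mul measurable_log integrable_log_div_one_add_sq
  rw [integral_sub (integrable_sinc_sq.integrableOn.const_mul _) hint.integrableOn,
    integral_const_mul, integral_sinc_sq_Ioi] at hsinc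
  linarith

end SincIntegrals

section ModelDensity

/-- The even density whose Fejér transform is exactly `π / 2 * κ * (log (1 / κ) + B)`. -/
noncomputable def modelDensity (B u : ℝ) : ℝ :=
  (log u + (B - 1 + eulerMascheroniConstant + log 2)) / 2

lemma powerBound_modelDensity (B : ℝ) {δ : ℝ} (hδ₀ : 0 < δ) (hδ₁ : δ < 1) :
    ∃ C, PowerBound (modelDensity B) C δ localLog := by
  set b := B - 1 + eulerMascheroniConstant + log 2 with hb
  have hlog := powerBound_log hδ₀ hδ₁
  refine ⟨1 / δ + |b|, by unfold modelDensity; fun_prop, by positivity, hδ₀.le, hδ₁,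
    hlog.integrable_error, hlog.error_nonneg, fun u ↦ ?_⟩
  have hconst : |b| ≤ |b| * (1 + |u|) ^ δ :=
    le_mul_of_one_le_right (abs_nonneg b) (one_le_rpow (by simp) hδ₀.le)
  rw [modelDensity, ← hb, abs_div, abs_two]
  have := abs_add_le (log u) b
  linarith [hlog.abs_le u, abs_nonneg (log u + b)]

lemma fejerTransform_modelDensity (B : ℝ) {κ : ℝ} (hκ : 0 < κ) :
    fejerTransform (modelDensity B) κ = π / 2 * κ * (log (1 / κ) + B) := by
  set b := B - 1 + eulerMascheroniConstant + log 2 with hb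
  have heven (u : ℝ) : fejerKernel κ |u| * modelDensity B |u| =
      fejerKernel κ u * modelDensity B u := by
    rcases abs_choice u with h | h <;> simp [h, fejerKernel, modelDensity]
  have hscale := integral_comp_mul_left_Ioi
    (fun v ↦ κ ^ 2 / 2 * (sinc v ^ 2 * log v + (b - log κ) * sinc v ^ 2)) 0 hκ
  rw [mul_zero] at hscale
  calc fejerTransform (modelDensity B) κ
      = 2 * ∫ u in Ioi (0 : ℝ), fejerKernel κ u * modelDensity B u := by
        rw [← integral_comp_abs]
        simp only [heven]
        rfl
    _ = 2 * ∫ u in Ioi (0 : ℝ), κ ^ 2 / 2 *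
          (sinc (κ * u) ^ 2 * log (κ * u) + (b - log κ) * sinc (κ * u) ^ 2) := by
        congr 1
        refine setIntegral_congr_fun measurableSet_Ioi fun u (hu : 0 < u) ↦ ?_
        simp only [fejerKernel, modelDensity]
        rw [log_mul hκ.ne' hu.ne', ← hb]
        ring
    _ = _ := by
        rw [hscale, integral_const_mul, integral_add
          (integrable_sinc_sq_mul measurable_log integrable_log_div_one_add_sq).integrableOn
          (integrable_sinc_sq.integrableOn.const_mul _), integral_const_mul, integral_sinc_sq_Ioi,
          integral_sinc_sq_mul_log_Ioi, smul_eq_mul, one_div, log_inv, hb]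
        field_simp
        ring

lemma integral_modelDensity (B T : ℝ) : ∫ t in (-T)..T, modelDensity B t =
    T * (log T + (B - 2 + eulerMascheroniConstant + log 2)) := by
  simp only [modelDensity]
  rw [intervalIntegral.integral_div, intervalIntegral.integral_add
    intervalIntegral.intervalIntegrable_log' intervalIntegrable_const, integral_log,
    intervalIntegral.integral_const, log_neg_eq_log, smul_eq_mul]
  ring

end ModelDensity

section GaussWave

lemma integrable_one_add_sq_mul_exp_neg_mul_sq {b : ℝ} (hb : 0 < b) :
    Integrable fun κ : ℝ ↦ (1 + κ ^ 2) * exp (-b * κ ^ 2) := by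
  have hsq := integrable_rpow_mul_exp_neg_mul_sq hb (s := 2) (by norm_num)
  simp only [rpow_two] at hsq
  refine ((integrable_exp_neg_mul_sq hb).add hsq).congr (.of_forall fun κ ↦ ?_)
  simp only [Pi.add_apply]
  ring

/-- The wave of frequency `2 y` with a Gaussian envelope of width `1 / s`, whose integral over `κ`
is a Gaussian of scale `s` in `y`. -/
noncomputable def gaussWave (s y κ : ℝ) : ℂ :=
  Complex.exp (2 * Complex.I * y * κ - s ^ 2 * κ ^ 2)

/-- The logarithmic derivative of `gaussWave s y`. -/
noncomputable def gaussWaveLogDeriv (s y κ : ℝ) : ℂ := 2 * Complex.I * y - 2 * s ^ 2 * κ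

/-- The second derivative of `gaussWave s y`. -/
noncomputable def gaussWaveDeriv₂ (s y κ : ℝ) : ℂ :=
  (gaussWaveLogDeriv s y κ ^ 2 - 2 * s ^ 2) * gaussWave s y κ

@[fun_prop]
lemma continuous_gaussWave (s y : ℝ) : Continuous (gaussWave s y) := by
  unfold gaussWave; fun_prop

@[fun_prop]
lemma continuous_gaussWaveLogDeriv (s y : ℝ) : Continuous (gaussWaveLogDeriv s y) := by
  unfold gaussWaveLogDeriv; fun_prop

@[fun_prop]
lemma continuous_gaussWaveDeriv₂ (s y : ℝ) : Continuous (gaussWaveDeriv₂ s y) := by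
  unfold gaussWaveDeriv₂; fun_prop

lemma hasDerivAt_gaussWave (s y κ : ℝ) :
    HasDerivAt (gaussWave s y) (gaussWaveLogDeriv s y κ * gaussWave s y κ) κ := by
  have hid : HasDerivAt (fun κ : ℝ ↦ (κ : ℂ)) 1 κ := (hasDerivAt_id (κ : ℂ)).comp_ofReal
  have hphase := (hid.const_mul (2 * Complex.I * y)).sub ((hid.pow 2).const_mul ((s : ℂ) ^ 2))
  refine hphase.cexp.congr_deriv ?_
  simp only [gaussWave, gaussWaveLogDeriv, Pi.sub_apply, Pi.pow_apply]
  ring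

lemma hasDerivAt_deriv_gaussWave (s y κ : ℝ) :
    HasDerivAt (fun κ ↦ gaussWaveLogDeriv s y κ * gaussWave s y κ) (gaussWaveDeriv₂ s y κ) κ := by
  have hid : HasDerivAt (fun κ : ℝ ↦ (κ : ℂ)) 1 κ := (hasDerivAt_id (κ : ℂ)).comp_ofReal
  have hlog : HasDerivAt (gaussWaveLogDeriv s y) (-(2 * s ^ 2 * 1)) κ :=
    (hid.const_mul (2 * (s : ℂ) ^ 2)).const_sub (2 * Complex.I * y)
  refine (hlog.mul (hasDerivAt_gaussWave s y κ)).congr_deriv ?_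
  rw [gaussWaveDeriv₂]
  ring

lemma norm_gaussWave (s y κ : ℝ) : ‖gaussWave s y κ‖ = exp (-s ^ 2 * κ ^ 2) := by
  rw [gaussWave, Complex.norm_exp]
  simp [← Complex.ofReal_pow]

lemma sq_norm_gaussWaveLogDeriv (s y κ : ℝ) :
    ‖gaussWaveLogDeriv s y κ‖ ^ 2 = 4 * y ^ 2 + 4 * s ^ 4 * κ ^ 2 := by
  have hre : (gaussWaveLogDeriv s y κ).re = -(2 * s ^ 2 * κ) := by
    simp [gaussWaveLogDeriv, ← Complex.ofReal_pow]
  have him : (gaussWaveLogDeriv s y κ).im = 2 * y := by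
    simp [gaussWaveLogDeriv, ← Complex.ofReal_pow]
  rw [Complex.sq_norm, Complex.normSq_apply, hre, him]
  ring

lemma norm_mul_gaussWave_le {s y κ a : ℝ} {z : ℂ} (hz : ‖z‖ ≤ a * (1 + s ^ 2 / 2 * κ ^ 2)) :
    ‖z * gaussWave s y κ‖ ≤ a * exp (-(s ^ 2 / 2) * κ ^ 2) := by
  have ha : 0 ≤ a := nonneg_of_mul_nonneg_left ((norm_nonneg z).trans hz) (by positivity)
  rw [norm_mul, norm_gaussWave]
  calc ‖z‖ * exp (-s ^ 2 * κ ^ 2)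
      ≤ a * exp (s ^ 2 / 2 * κ ^ 2) * exp (-s ^ 2 * κ ^ 2) := by
        gcongr
        refine hz.trans (mul_le_mul_of_nonneg_left ?_ ha)
        linarith [add_one_le_exp (s ^ 2 / 2 * κ ^ 2)]
    _ = a * exp (-(s ^ 2 / 2) * κ ^ 2) := by
        rw [mul_assoc, ← exp_add]
        ring_nf

lemma norm_gaussWaveDeriv₂_le (s y κ : ℝ) :
    ‖gaussWaveDeriv₂ s y κ‖ ≤ 8 * (y ^ 2 + s ^ 2) * exp (-(s ^ 2 / 2) * κ ^ 2) := by
  refine norm_mul_gaussWave_le ((norm_sub_le _ _).trans ?_)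
  have hnorm : ‖(2 * s ^ 2 : ℂ)‖ = 2 * s ^ 2 := by simp
  rw [norm_pow, sq_norm_gaussWaveLogDeriv, hnorm]
  nlinarith [sq_nonneg (y * (s * κ)), sq_nonneg y, sq_nonneg s]

variable {s : ℝ}

lemma integrable_gaussWave (hs : 0 < s) (y : ℝ) : Integrable (gaussWave s y) :=
  (integrable_exp_neg_mul_sq (by positivity : 0 < s ^ 2)).mono'
    (continuous_gaussWave s y).aestronglyMeasurable
    (.of_forall fun κ ↦ (norm_gaussWave s y κ).le)

lemma integrable_deriv_gaussWave (hs : 0 < s) (y : ℝ) :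
    Integrable fun κ ↦ gaussWaveLogDeriv s y κ * gaussWave s y κ := by
  refine ((integrable_exp_neg_mul_sq (by positivity : 0 < s ^ 2 / 2)).const_mul
    (1 + 4 * y ^ 2 + 8 * s ^ 2)).mono' (Continuous.aestronglyMeasurable (by fun_prop))
    (.of_forall fun κ ↦ norm_mul_gaussWave_le ?_)
  have hsq := sq_norm_gaussWaveLogDeriv s y κ
  nlinarith [sq_nonneg (‖gaussWaveLogDeriv s y κ‖ - 1), sq_nonneg (y * (s * κ)),
    sq_nonneg (s * κ), sq_nonneg y, sq_nonneg s]

lemma integrable_gaussWaveDeriv₂ (hs : 0 < s) (y : ℝ) : Integrable (gaussWaveDeriv₂ s y) :=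
  ((integrable_exp_neg_mul_sq (by positivity : 0 < s ^ 2 / 2)).const_mul _).mono'
    (continuous_gaussWaveDeriv₂ s y).aestronglyMeasurable
    (.of_forall (norm_gaussWaveDeriv₂_le s y))

lemma integral_gaussWave (hs : 0 < s) (y : ℝ) :
    ∫ κ, gaussWave s y κ = ((√π / s * exp (-(y / s) ^ 2) : ℝ) : ℂ) := by
  have hsplit (κ : ℝ) : gaussWave s y κ = Complex.exp (Complex.I * ((2 * y : ℝ) : ℂ) * κ) *
      Complex.exp (-((s ^ 2 : ℝ) : ℂ) * (κ : ℂ) ^ 2) := by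
    rw [← Complex.exp_add, gaussWave]
    congr 1
    push_cast
    ring
  have hscale : ((π : ℂ) / ((s ^ 2 : ℝ) : ℂ)) ^ (1 / 2 : ℂ) = ((√π / s : ℝ) : ℂ) := by
    rw [← Complex.ofReal_div, show (1 / 2 : ℂ) = ((1 / 2 : ℝ) : ℂ) by push_cast; rfl,
      ← Complex.ofReal_cpow (by positivity), ← sqrt_eq_rpow, sqrt_div pi_pos.le, sqrt_sq hs.le]
  simp only [hsplit]
  rw [fourierIntegral_gaussian (by rw [Complex.ofReal_re]; positivity), hscale,
    Complex.ofReal_mul (√π / s), Complex.ofReal_exp]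
  congr 2
  push_cast
  have : (s : ℂ) ≠ 0 := Complex.ofReal_ne_zero.2 hs.ne'
  field_simp
  ring

lemma two_cos_smul_gaussWave (s y u κ : ℝ) :
    (2 * cos (2 * κ * u)) • gaussWave s y κ = gaussWave s (y + u) κ + gaussWave s (y - u) κ := by
  rw [Complex.real_smul, Complex.ofReal_mul, Complex.ofReal_cos, Complex.ofReal_ofNat,
    Complex.two_cos, add_mul]
  simp only [gaussWave]
  rw [← Complex.exp_add, ← Complex.exp_add]
  congr 2 <;> push_cast <;> ring

lemma integral_smul_deriv_deriv_eq {E : Type*} [NormedAddCommGroup E] [NormedSpace ℝ E]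
    {S S' S'' : ℝ → ℝ} {φ φ' φ'' : ℝ → E} {b b' b'' : ℝ}
    (hS : ∀ x, HasDerivAt S (S' x) x) (hS' : ∀ x, HasDerivAt S' (S'' x) x)
    (hS''m : AEStronglyMeasurable S'') (hb : ∀ x, ‖S x‖ ≤ b) (hb' : ∀ x, ‖S' x‖ ≤ b')
    (hb'' : ∀ x, ‖S'' x‖ ≤ b'')
    (hφ : ∀ x, HasDerivAt φ (φ' x) x) (hφ' : ∀ x, HasDerivAt φ' (φ'' x) x)
    (hint : Integrable φ) (hint' : Integrable φ') (hint'' : Integrable φ'') :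
    ∫ x, S x • φ'' x = ∫ x, S'' x • φ x := by
  have hSm : AEStronglyMeasurable S :=
    (continuous_iff_continuousAt.2 fun x ↦ (hS x).continuousAt).aestronglyMeasurable
  have hS'm : AEStronglyMeasurable S' :=
    (continuous_iff_continuousAt.2 fun x ↦ (hS' x).continuousAt).aestronglyMeasurable
  have hparts := integral_bilinear_hasDerivAt_right_eq_neg_left_of_integrable
    (L := ContinuousLinearMap.lsmul ℝ ℝ) (fun x _ ↦ hS x) (fun x _ ↦ hφ' x)
    (hint''.bdd_smul b hSm (.of_forall hb)) (hint'.bdd_smul b' hS'm (.of_forall hb'))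
    (hint'.bdd_smul b hSm (.of_forall hb))
  have hparts' := integral_bilinear_hasDerivAt_right_eq_neg_left_of_integrable
    (L := ContinuousLinearMap.lsmul ℝ ℝ) (fun x _ ↦ hS' x) (fun x _ ↦ hφ x)
    (hint'.bdd_smul b' hS'm (.of_forall hb')) (hint.bdd_smul b'' hS''m (.of_forall hb''))
    (hint.bdd_smul b' hS'm (.of_forall hb'))
  simp only [ContinuousLinearMap.lsmul_apply] at hparts hparts'
  rw [hparts, hparts', neg_neg]

lemma hasDerivAt_fejerKernel {u : ℝ} (hu : u ≠ 0) (κ : ℝ) :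
    HasDerivAt (fun κ ↦ fejerKernel κ u) (sin (2 * κ * u) / u) κ := by
  simp only [fejerKernel_of_ne_zero _ hu]
  have hmul : HasDerivAt (fun κ : ℝ ↦ κ * u) u κ := by
    simpa using (hasDerivAt_id κ).mul_const u
  refine ((hmul.sin.div_const u).pow 2).congr_deriv ?_
  rw [mul_assoc 2 κ u, sin_two_mul, pow_one]
  push_cast
  field_simp

lemma hasDerivAt_deriv_fejerKernel {u : ℝ} (hu : u ≠ 0) (κ : ℝ) :
    HasDerivAt (fun κ ↦ sin (2 * κ * u) / u) (2 * cos (2 * κ * u)) κ := by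
  have hmul : HasDerivAt (fun κ : ℝ ↦ 2 * κ * u) (2 * u) κ := by
    simpa using ((hasDerivAt_id κ).const_mul 2).mul_const u
  refine (hmul.sin.div_const u).congr_deriv ?_
  field_simp

lemma integral_fejerKernel_smul_gaussWaveDeriv₂ (hs : 0 < s) (y : ℝ) {u : ℝ} (hu : u ≠ 0) :
    ∫ κ, fejerKernel κ u • gaussWaveDeriv₂ s y κ =
      ((√π / s * (exp (-((u - y) / s) ^ 2) + exp (-((u + y) / s) ^ 2)) : ℝ) : ℂ) := by
  have hkernel (κ : ℝ) : ‖fejerKernel κ u‖ ≤ 1 / u ^ 2 := by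
    rw [norm_of_nonneg (fejerKernel_nonneg κ u), fejerKernel_of_ne_zero κ hu, div_pow]
    gcongr
    exact sin_sq_le_one _
  have hkernel' (κ : ℝ) : ‖sin (2 * κ * u) / u‖ ≤ 1 / |u| := by
    rw [norm_div, norm_eq_abs, norm_eq_abs]
    gcongr
    exact abs_sin_le_one _
  have hkernel'' (κ : ℝ) : ‖2 * cos (2 * κ * u)‖ ≤ 2 := by
    rw [norm_mul, norm_ofNat, norm_eq_abs]
    linarith [abs_cos_le_one (2 * κ * u)]
  rw [integral_smul_deriv_deriv_eq (hasDerivAt_fejerKernel hu) (hasDerivAt_deriv_fejerKernel hu)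
    (Continuous.aestronglyMeasurable (by fun_prop)) hkernel hkernel' hkernel''
    (hasDerivAt_gaussWave s y) (hasDerivAt_deriv_gaussWave s y) (integrable_gaussWave hs y)
    (integrable_deriv_gaussWave hs y) (integrable_gaussWaveDeriv₂ hs y)]
  simp only [two_cos_smul_gaussWave]
  rw [integral_add (integrable_gaussWave hs _) (integrable_gaussWave hs _), integral_gaussWave hs,
    integral_gaussWave hs, ← neg_sub u y, neg_div, neg_sq, add_comm y u]
  push_cast
  ring

end GaussWave

section GaussianMean

/-- The unnormalised mean of `h` under the Gaussian of scale `s` centred at `y`; its total mass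
is `√π`. -/
noncomputable def gaussianMean (s : ℝ) (h : ℝ → ℝ) (y : ℝ) : ℝ :=
  ∫ z, exp (-z ^ 2) * h (y + s * z)

variable {s : ℝ} {h : ℝ → ℝ}

lemma exp_neg_sq_div_le (hs : 0 < s) (y u : ℝ) :
    exp (-((u - y) / s) ^ 2) ≤ (1 + 2 * y ^ 2 + 2 * s ^ 2) / (1 + u ^ 2) := by
  set x := (u - y) / s with hx
  have hu : u = y + s * x := by rw [hx]; field_simp; ring
  have hexp : 1 + x ^ 2 ≤ exp (x ^ 2) := by linarith [add_one_le_exp (x ^ 2)]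
  rw [exp_neg, ← one_div, div_le_div_iff₀ (exp_pos _) (by positivity), one_mul]
  calc 1 + u ^ 2 ≤ (1 + 2 * y ^ 2 + 2 * s ^ 2) * (1 + x ^ 2) := by
        rw [hu]
        nlinarith [sq_nonneg (y - s * x), sq_nonneg (y * x), sq_nonneg s, sq_nonneg x]
    _ ≤ (1 + 2 * y ^ 2 + 2 * s ^ 2) * exp (x ^ 2) := by gcongr

lemma integrable_exp_neg_sq_div_mul (hs : 0 < s) (hh : Measurable h)
    (hint : Integrable fun u ↦ h u / (1 + u ^ 2)) (y : ℝ) :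
    Integrable fun u ↦ exp (-((u - y) / s) ^ 2) * h u := by
  refine (hint.norm.const_mul (1 + 2 * y ^ 2 + 2 * s ^ 2)).mono'
    (Measurable.aestronglyMeasurable (by fun_prop)) (.of_forall fun u ↦ ?_)
  rw [norm_mul, norm_div, norm_of_nonneg (exp_pos _).le,
    norm_of_nonneg (show (0 : ℝ) ≤ 1 + u ^ 2 by positivity), ← mul_div_assoc,
    ← div_mul_eq_mul_div]
  gcongr
  exact exp_neg_sq_div_le hs y u

lemma gaussianMean_eq (hs : 0 < s) (h : ℝ → ℝ) (y : ℝ) :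
    gaussianMean s h y = s⁻¹ * ∫ u, exp (-((u - y) / s) ^ 2) * h u := by
  have hscale := Measure.integral_comp_mul_left
    (fun w ↦ exp (-((y + w - y) / s) ^ 2) * h (y + w)) s
  rw [integral_add_left_eq_self (fun u ↦ exp (-((u - y) / s) ^ 2) * h u) y,
    abs_of_pos (by positivity), smul_eq_mul] at hscale
  simpa only [gaussianMean, add_sub_cancel_left, mul_div_cancel_left₀ _ hs.ne'] using hscale

lemma integrable_fejerKernel_mul_smul_gaussWaveDeriv₂ (hs : 0 < s) (hh : Measurable h)
    (hint : Integrable fun u ↦ h u / (1 + u ^ 2)) (y : ℝ) :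
    Integrable fun p : ℝ × ℝ ↦ (fejerKernel p.1 p.2 * h p.2) • gaussWaveDeriv₂ s y p.1 := by
  have hgauss := (integrable_one_add_sq_mul_exp_neg_mul_sq
    (by positivity : 0 < s ^ 2 / 2)).const_mul (16 * (y ^ 2 + s ^ 2))
  refine (hgauss.mul_prod hint.abs).mono' ?_ (.of_forall fun ⟨κ, u⟩ ↦ ?_)
  · exact ((continuous_fejerKernel.measurable.mul (hh.comp measurable_snd)).smul
      ((continuous_gaussWaveDeriv₂ s y).measurable.comp measurable_fst)).aestronglyMeasurable
  · rw [norm_smul, norm_eq_abs]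
    calc |fejerKernel κ u * h u| * ‖gaussWaveDeriv₂ s y κ‖
        ≤ (2 * (1 + κ ^ 2) * |h u / (1 + u ^ 2)|) *
            (8 * (y ^ 2 + s ^ 2) * exp (-(s ^ 2 / 2) * κ ^ 2)) := by
          gcongr
          · exact abs_fejerKernel_mul_le h κ u
          · exact norm_gaussWaveDeriv₂_le s y κ
      _ = _ := by ring

lemma integral_fejerTransform_smul_gaussWaveDeriv₂ (hs : 0 < s) (hh : Measurable h)
    (hint : Integrable fun u ↦ h u / (1 + u ^ 2)) (y : ℝ) :
    ∫ κ, fejerTransform h κ • gaussWaveDeriv₂ s y κ =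
      ((√π * (gaussianMean s h y + gaussianMean s h (-y)) : ℝ) : ℂ) := by
  calc ∫ κ, fejerTransform h κ • gaussWaveDeriv₂ s y κ
      = ∫ u, ∫ κ, (fejerKernel κ u * h u) • gaussWaveDeriv₂ s y κ := by
        rw [← integral_integral_swap (integrable_fejerKernel_mul_smul_gaussWaveDeriv₂ hs hh hint y)]
        simp only [integral_smul_const]
        rfl
    _ = ∫ u, ((√π / s * (exp (-((u - y) / s) ^ 2) * h u +
          exp (-((u - -y) / s) ^ 2) * h u) : ℝ) : ℂ) := by
        refine integral_congr_ae ?_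
        filter_upwards [Measure.ae_ne volume (0 : ℝ)] with u hu
        simp only [mul_comm _ (h u), mul_smul]
        rw [integral_smul, integral_fejerKernel_smul_gaussWaveDeriv₂ hs y hu, sub_neg_eq_add,
          Complex.real_smul, ← Complex.ofReal_mul]
        congr 1
        ring
    _ = _ := by
        rw [integral_complex_ofReal, integral_const_mul, integral_add
          (integrable_exp_neg_sq_div_mul hs hh hint y)
          (integrable_exp_neg_sq_div_mul hs hh hint (-y)), gaussianMean_eq hs, gaussianMean_eq hs]
        congr 1
        field_simp

lemma integrable_exp_neg_sq_mul_comp (hs : 0 < s) (hh : Measurable h)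
    (hint : Integrable fun u ↦ h u / (1 + u ^ 2)) (y : ℝ) :
    Integrable fun z ↦ exp (-z ^ 2) * h (y + s * z) := by
  have hcomp := ((integrable_exp_neg_sq_div_mul hs hh hint y).comp_add_left y).comp_mul_left' hs.ne'
  simpa only [add_sub_cancel_left, mul_div_cancel_left₀ _ hs.ne'] using hcomp

lemma gaussianMean_abs_le (hs : 0 < s) (hint : Integrable fun u ↦ h u / (1 + u ^ 2)) (y : ℝ) :
    gaussianMean s (fun u ↦ |h u|) y ≤
      s⁻¹ * ((1 + 2 * y ^ 2 + 2 * s ^ 2) * ∫ u, |h u / (1 + u ^ 2)|) := by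
  rw [gaussianMean_eq hs]
  gcongr s⁻¹ * ?_
  rw [← integral_const_mul]
  refine integral_mono_of_nonneg (.of_forall fun u ↦ by positivity) (hint.abs.const_mul _)
    (.of_forall fun u ↦ ?_)
  simp only
  rw [abs_div, abs_of_nonneg (show (0 : ℝ) ≤ 1 + u ^ 2 by positivity), ← mul_div_assoc,
    ← div_mul_eq_mul_div]
  gcongr
  exact exp_neg_sq_div_le hs y u

lemma integrable_prod_exp_neg_sq_mul_comp (hs : 0 < s) (hh : Measurable h)
    (hint : Integrable fun u ↦ h u / (1 + u ^ 2)) (T : ℝ) :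
    Integrable (fun p : ℝ × ℝ ↦ exp (-p.2 ^ 2) * h (p.1 + s * p.2))
      ((volume.restrict (Ioc (-T) T)).prod volume) := by
  have hmeas : Measurable fun p : ℝ × ℝ ↦ exp (-p.2 ^ 2) * h (p.1 + s * p.2) := by fun_prop
  rw [integrable_prod_iff hmeas.aestronglyMeasurable]
  refine ⟨.of_forall fun y ↦ integrable_exp_neg_sq_mul_comp hs hh hint y, ?_⟩
  have hconst : IntegrableOn (fun _ : ℝ ↦
      s⁻¹ * ((1 + 2 * T ^ 2 + 2 * s ^ 2) * ∫ u, |h u / (1 + u ^ 2)|)) (Ioc (-T) T) :=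
    integrableOn_const (by simp)
  refine hconst.mono' hmeas.norm.aestronglyMeasurable.integral_prod_right' ?_
  filter_upwards [ae_restrict_mem measurableSet_Ioc] with y hy
  have hy2 : y ^ 2 ≤ T ^ 2 := sq_le_sq' hy.1.le hy.2
  rw [norm_of_nonneg (integral_nonneg fun _ ↦ norm_nonneg _)]
  simp only [norm_mul, norm_of_nonneg (exp_pos _).le, norm_eq_abs]
  refine (gaussianMean_abs_le hs hint y).trans ?_
  gcongr

variable {T : ℝ}

lemma intervalIntegrable_gaussianMean (hs : 0 < s) (hh : Measurable h)
    (hint : Integrable fun u ↦ h u / (1 + u ^ 2)) (hT : 0 ≤ T) :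
    IntervalIntegrable (gaussianMean s h) volume (-T) T := by
  rw [intervalIntegrable_iff_integrableOn_Ioc_of_le (by linarith)]
  exact (integrable_prod_exp_neg_sq_mul_comp hs hh hint T).integral_prod_left

lemma integrable_exp_neg_sq_mul_integral_comp (hs : 0 < s) (hh : Measurable h)
    (hint : Integrable fun u ↦ h u / (1 + u ^ 2)) (hT : 0 ≤ T) :
    Integrable fun z ↦ exp (-z ^ 2) * ∫ y in (-T)..T, h (y + s * z) := by
  simp only [intervalIntegral.integral_of_le (show -T ≤ T by linarith), ← integral_const_mul]
  exact (integrable_prod_exp_neg_sq_mul_comp hs hh hint T).integral_prod_right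

lemma integral_gaussianMean (hs : 0 < s) (hh : Measurable h)
    (hint : Integrable fun u ↦ h u / (1 + u ^ 2)) (hT : 0 ≤ T) :
    ∫ y in (-T)..T, gaussianMean s h y =
      ∫ z, exp (-z ^ 2) * ∫ y in (-T)..T, h (y + s * z) := by
  simp only [intervalIntegral.integral_of_le (show -T ≤ T by linarith), ← integral_const_mul]
  exact integral_integral_swap (integrable_prod_exp_neg_sq_mul_comp hs hh hint T)

lemma integrable_abs_fejerTransform_mul_exp (hs : 0 < s) (hh : Measurable h)
    (hint : Integrable fun u ↦ h u / (1 + u ^ 2)) :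
    Integrable fun κ ↦ |fejerTransform h κ| * exp (-(s ^ 2 / 2) * κ ^ 2) := by
  refine ((integrable_one_add_sq_mul_exp_neg_mul_sq (by positivity : 0 < s ^ 2 / 2)).const_mul
    (2 * ∫ u, |h u / (1 + u ^ 2)|)).mono' ?_ (.of_forall fun κ ↦ ?_)
  · exact ((measurable_fejerTransform hh).abs.mul (by fun_prop)).aestronglyMeasurable
  · rw [norm_of_nonneg (by positivity), ← mul_assoc]
    gcongr
    exact abs_fejerTransform_le_mul_one_add_sq hint κ

lemma sqrt_pi_mul_abs_gaussianMean_add_le (hs : 0 < s) (hh : Measurable h)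
    (hint : Integrable fun u ↦ h u / (1 + u ^ 2)) (y : ℝ) :
    √π * |gaussianMean s h y + gaussianMean s h (-y)| ≤ 16 * (y ^ 2 + s ^ 2) *
      ∫ κ in Ioi 0, |fejerTransform h κ| * exp (-(s ^ 2 / 2) * κ ^ 2) := by
  set J := ∫ κ in Ioi 0, |fejerTransform h κ| * exp (-(s ^ 2 / 2) * κ ^ 2) with hJ
  have heven (κ : ℝ) : |fejerTransform h (|κ|)| * exp (-(s ^ 2 / 2) * |κ| ^ 2) =
      |fejerTransform h κ| * exp (-(s ^ 2 / 2) * κ ^ 2) := by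
    rcases abs_choice κ with habs | habs <;> simp [habs, fejerTransform_neg]
  have hJ2 : ∫ κ, |fejerTransform h κ| * exp (-(s ^ 2 / 2) * κ ^ 2) = 2 * J := by
    rw [hJ, ← integral_comp_abs]
    simp only [heven]
  calc √π * |gaussianMean s h y + gaussianMean s h (-y)|
      = ‖∫ κ, fejerTransform h κ • gaussWaveDeriv₂ s y κ‖ := by
        rw [integral_fejerTransform_smul_gaussWaveDeriv₂ hs hh hint, Complex.norm_real, norm_mul,
          norm_of_nonneg (sqrt_nonneg π), norm_eq_abs]
    _ ≤ ∫ κ, 8 * (y ^ 2 + s ^ 2) *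
          (|fejerTransform h κ| * exp (-(s ^ 2 / 2) * κ ^ 2)) := by
        refine norm_integral_le_of_norm_le
          ((integrable_abs_fejerTransform_mul_exp hs hh hint).const_mul _)
          (.of_forall fun κ ↦ ?_)
        rw [norm_smul, norm_eq_abs, mul_left_comm]
        gcongr
        exact norm_gaussWaveDeriv₂_le s y κ
    _ = 16 * (y ^ 2 + s ^ 2) * J := by
        rw [integral_const_mul, hJ2]
        ring

lemma sqrt_pi_mul_abs_integral_gaussianMean_le (hs : 0 < s) (hh : Measurable h)
    (hint : Integrable fun u ↦ h u / (1 + u ^ 2)) (hT : 0 ≤ T) :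
    √π * |∫ y in (-T)..T, gaussianMean s h y| ≤ 16 * T * (T ^ 2 + s ^ 2) *
      ∫ κ in Ioi 0, |fejerTransform h κ| * exp (-(s ^ 2 / 2) * κ ^ 2) := by
  set J := ∫ κ in Ioi 0, |fejerTransform h κ| * exp (-(s ^ 2 / 2) * κ ^ 2)
  have : 0 ≤ J := integral_nonneg fun _ ↦ by positivity
  have hmean := intervalIntegrable_gaussianMean hs hh hint hT
  have hmean_neg : IntervalIntegrable (fun y ↦ gaussianMean s h (-y)) volume (-T) T := by
    simpa using (hmean.comp_sub_left 0).symm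
  have hsymm : ∫ y in (-T)..T, √π * (gaussianMean s h y + gaussianMean s h (-y)) =
      2 * (√π * ∫ y in (-T)..T, gaussianMean s h y) := by
    rw [intervalIntegral.integral_const_mul, intervalIntegral.integral_add hmean hmean_neg,
      intervalIntegral.integral_comp_neg, neg_neg]
    ring
  have hbound := intervalIntegral.norm_integral_le_of_norm_le_const (a := -T) (b := T)
    (f := fun y ↦ √π * (gaussianMean s h y + gaussianMean s h (-y)))
    (C := 16 * (T ^ 2 + s ^ 2) * J) fun y hy ↦ by
      rw [uIoc_of_le (by linarith)] at hy
      have hy2 : y ^ 2 ≤ T ^ 2 := sq_le_sq' hy.1.le hy.2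
      rw [norm_mul, norm_of_nonneg (sqrt_nonneg π), norm_eq_abs]
      refine (sqrt_pi_mul_abs_gaussianMean_add_le hs hh hint y).trans ?_
      gcongr
  rw [hsymm, norm_mul, norm_mul, norm_ofNat, norm_of_nonneg (sqrt_nonneg π), norm_eq_abs,
    sub_neg_eq_add, abs_of_nonneg (show 0 ≤ T + T by linarith)] at hbound
  linarith

end GaussianMean

namespace PowerBound

variable {h ℓ : ℝ → ℝ} {C δ s T : ℝ}

lemma norm_le_of_mem_uIoc (hb : PowerBound h C δ ℓ) {M a b x : ℝ} (ha : |a| ≤ M) (hbM : |b| ≤ M)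
    (hx : x ∈ uIoc a b) : ‖h x‖ ≤ C * (1 + M) ^ δ + ℓ x := by
  have hxM : |x| ≤ M := by
    rw [mem_uIoc] at hx
    rw [_root_.abs_le] at *
    rcases hx with hx | hx <;> constructor <;> linarith [hx.1, hx.2]
  refine (hb.abs_le x).trans ?_
  have := hb.const_nonneg
  have := hb.exponent_nonneg
  gcongr

lemma integrableOn_uIoc (hb : PowerBound h C δ ℓ) (a b : ℝ) : IntegrableOn h (uIoc a b) := by
  refine ((integrableOn_const (C := C * (1 + max |a| |b|) ^ δ) (by simp [uIoc])).add
    hb.integrable_error.integrableOn).mono' hb.measurable.aestronglyMeasurable ?_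
  filter_upwards [ae_restrict_mem measurableSet_uIoc] with x hx
  exact hb.norm_le_of_mem_uIoc (le_max_left _ _) (le_max_right _ _) hx

lemma intervalIntegrable (hb : PowerBound h C δ ℓ) (a b : ℝ) : IntervalIntegrable h volume a b :=
  intervalIntegrable_iff.2 (hb.integrableOn_uIoc a b)

lemma abs_intervalIntegral_le (hb : PowerBound h C δ ℓ) {M a b : ℝ} (ha : |a| ≤ M)
    (hbM : |b| ≤ M) : |∫ x in a..b, h x| ≤ |b - a| * (C * (1 + M) ^ δ) + ∫ u, ℓ u := by
  have hconst : IntegrableOn (fun _ : ℝ ↦ C * (1 + M) ^ δ) (uIoc a b) :=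
    integrableOn_const (by simp [uIoc])
  have hℓ := hb.integrable_error
  calc |∫ x in a..b, h x| ≤ ∫ x in uIoc a b, ‖h x‖ := by
        rw [← norm_eq_abs]
        exact intervalIntegral.norm_integral_le_integral_norm_uIoc
    _ ≤ ∫ x in uIoc a b, (C * (1 + M) ^ δ + ℓ x) :=
        setIntegral_mono_on (hb.integrableOn_uIoc a b).norm (hconst.add hℓ.integrableOn)
          measurableSet_uIoc fun x hx ↦ hb.norm_le_of_mem_uIoc ha hbM hx
    _ = |b - a| * (C * (1 + M) ^ δ) + ∫ x in uIoc a b, ℓ x := by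
        rw [integral_add hconst hℓ.integrableOn, setIntegral_const, smul_eq_mul, measureReal_def,
          volume_uIoc, ENNReal.toReal_ofReal (abs_nonneg _)]
    _ ≤ _ := add_le_add le_rfl (setIntegral_le_integral hℓ (.of_forall hb.error_nonneg))

lemma abs_integral_sub_integral_comp_add_le (hb : PowerBound h C δ ℓ) (hT : 0 ≤ T) (a : ℝ) :
    |(∫ y in (-T)..T, h y) - ∫ y in (-T)..T, h (y + a)| ≤
      2 * (|a| * (C * (1 + (T + |a|)) ^ δ) + ∫ u, ℓ u) := by
  have hT' : |T| = T := abs_of_nonneg hT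
  have hT_le : |T| ≤ T + |a| := by linarith [abs_nonneg a]
  have hneg_le : |-T| ≤ T + |a| := by rwa [abs_neg]
  have hadd_le : |T + a| ≤ T + |a| := by linarith [abs_add_le T a]
  have hneg_add_le : |-T + a| ≤ T + |a| := by linarith [abs_add_le (-T) a, abs_neg T]
  have hleft := hb.abs_intervalIntegral_le hneg_le hneg_add_le
  have hright := hb.abs_intervalIntegral_le hT_le hadd_le
  rw [show -T + a - -T = a by ring] at hleft
  rw [add_sub_cancel_left] at hright
  rw [intervalIntegral.integral_comp_add_right,
    intervalIntegral.integral_interval_sub_interval_comm (hb.intervalIntegrable _ _)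
      (hb.intervalIntegrable _ _) (hb.intervalIntegrable _ _)]
  refine (abs_sub _ _).trans ?_
  linarith

lemma abs_integral_sub_integral_comp_add_mul_le (hb : PowerBound h C δ ℓ) (hs : 0 < s)
    (hsT : s ≤ T) (hT : 1 ≤ T) (z : ℝ) :
    |(∫ y in (-T)..T, h y) - ∫ y in (-T)..T, h (y + s * z)| ≤
      8 * s * C * T ^ δ * (1 + z ^ 2) + 2 * ∫ u, ℓ u := by
  have hδ := hb.exponent_nonneg
  have hC := hb.const_nonneg
  have hz : 1 ≤ 1 + |z| := by linarith [abs_nonneg z]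
  have hpow : (1 + (T + s * |z|)) ^ δ ≤ 2 * T ^ δ * (1 + |z|) := by
    calc (1 + (T + s * |z|)) ^ δ ≤ (2 * T * (1 + |z|)) ^ δ := by
          gcongr
          nlinarith [abs_nonneg z]
      _ = 2 ^ δ * T ^ δ * (1 + |z|) ^ δ := by
          rw [mul_rpow (by positivity) (by positivity), mul_rpow (by positivity) (by positivity)]
      _ ≤ 2 ^ (1 : ℝ) * T ^ δ * (1 + |z|) ^ (1 : ℝ) := by
          gcongr <;> linarith [hb.exponent_lt_one]
      _ = 2 * T ^ δ * (1 + |z|) := by simp only [rpow_one]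
  have hquad : |z| * (1 + |z|) ≤ 2 * (1 + z ^ 2) := by
    nlinarith [sq_nonneg (|z| - 1), sq_abs z]
  refine (hb.abs_integral_sub_integral_comp_add_le (by linarith) (s * z)).trans ?_
  rw [abs_mul, abs_of_pos hs]
  calc 2 * (s * |z| * (C * (1 + (T + s * |z|)) ^ δ) + ∫ u, ℓ u)
      ≤ 2 * (s * |z| * (C * (2 * T ^ δ * (1 + |z|))) + ∫ u, ℓ u) := by gcongr
    _ = 4 * s * C * T ^ δ * (|z| * (1 + |z|)) + 2 * ∫ u, ℓ u := by ring
    _ ≤ 4 * s * C * T ^ δ * (2 * (1 + z ^ 2)) + 2 * ∫ u, ℓ u := by gcongr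
    _ = _ := by ring

lemma abs_sqrt_pi_mul_integral_sub_integral_gaussianMean_le (hb : PowerBound h C δ ℓ)
    (hs : 0 < s) (hsT : s ≤ T) (hT : 1 ≤ T) :
    |√π * (∫ y in (-T)..T, h y) - ∫ y in (-T)..T, gaussianMean s h y| ≤
      8 * s * C * T ^ δ * (∫ z : ℝ, (1 + z ^ 2) * exp (-1 * z ^ 2)) + 2 * (∫ u, ℓ u) * √π := by
  have hint := hb.integrable_div_one_add_sq
  have hT₀ : 0 ≤ T := by linarith
  have hgauss : Integrable fun z : ℝ ↦ exp (-z ^ 2) := by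
    simpa using integrable_exp_neg_mul_sq one_pos
  have hmass : ∫ z : ℝ, exp (-z ^ 2) = √π := by simpa using integral_gaussian 1
  have hquad := integrable_one_add_sq_mul_exp_neg_mul_sq one_pos
  have hdiff : √π * (∫ y in (-T)..T, h y) - ∫ y in (-T)..T, gaussianMean s h y =
      ∫ z, exp (-z ^ 2) * ((∫ y in (-T)..T, h y) - ∫ y in (-T)..T, h (y + s * z)) := by
    simp only [mul_sub]
    rw [integral_sub (hgauss.mul_const _)
      (integrable_exp_neg_sq_mul_integral_comp hs hb.measurable hint hT₀), integral_mul_const,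
      hmass, integral_gaussianMean hs hb.measurable hint hT₀]
  have hmajorant : 8 * s * C * T ^ δ * (∫ z : ℝ, (1 + z ^ 2) * exp (-1 * z ^ 2)) +
      2 * (∫ u, ℓ u) * √π = ∫ z : ℝ, (8 * s * C * T ^ δ * ((1 + z ^ 2) * exp (-1 * z ^ 2)) +
        2 * (∫ u, ℓ u) * exp (-z ^ 2)) := by
    rw [integral_add (hquad.const_mul _) (hgauss.const_mul _), integral_const_mul,
      integral_const_mul, hmass]
  rw [hdiff, hmajorant, ← norm_eq_abs]
  refine norm_integral_le_of_norm_le ((hquad.const_mul _).add (hgauss.const_mul _))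
    (.of_forall fun z ↦ ?_)
  rw [norm_mul, norm_of_nonneg (exp_pos _).le, norm_eq_abs, neg_one_mul]
  calc exp (-z ^ 2) * |(∫ y in (-T)..T, h y) - ∫ y in (-T)..T, h (y + s * z)|
      ≤ exp (-z ^ 2) * (8 * s * C * T ^ δ * (1 + z ^ 2) + 2 * ∫ u, ℓ u) := by
        gcongr
        exact hb.abs_integral_sub_integral_comp_add_mul_le hs hsT hT z
    _ = _ := by ring

lemma abs_integral_le_fejerTransform (hb : PowerBound h C δ ℓ) (hs : 0 < s) (hsT : s ≤ T)
    (hT : 1 ≤ T) :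
    |∫ y in (-T)..T, h y| ≤
      8 * s * C * T ^ δ * (∫ z : ℝ, (1 + z ^ 2) * exp (-1 * z ^ 2)) + 2 * (∫ u, ℓ u) * √π +
      32 * T ^ 3 * ∫ κ in Ioi 0, |fejerTransform h κ| * exp (-(s ^ 2 / 2) * κ ^ 2) := by
  set J := ∫ κ in Ioi 0, |fejerTransform h κ| * exp (-(s ^ 2 / 2) * κ ^ 2)
  have : 0 ≤ J := integral_nonneg fun _ ↦ by positivity
  have hpi : 1 ≤ √π := one_le_sqrt.2 (by linarith [pi_gt_three])
  have hunsmooth := hb.abs_sqrt_pi_mul_integral_sub_integral_gaussianMean_le hs hsT hT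
  have hmean : |∫ y in (-T)..T, gaussianMean s h y| ≤ 32 * T ^ 3 * J := by
    calc |∫ y in (-T)..T, gaussianMean s h y| ≤ √π * |∫ y in (-T)..T, gaussianMean s h y| :=
          le_mul_of_one_le_left (abs_nonneg _) hpi
      _ ≤ 16 * T * (T ^ 2 + s ^ 2) * J := sqrt_pi_mul_abs_integral_gaussianMean_le hs hb.measurable
          hb.integrable_div_one_add_sq (by linarith)
      _ ≤ 16 * T * (T ^ 2 + T ^ 2) * J := by gcongr
      _ = 32 * T ^ 3 * J := by ring
  calc |∫ y in (-T)..T, h y| ≤ |√π * ∫ y in (-T)..T, h y| := by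
        rw [abs_mul, abs_of_nonneg (sqrt_nonneg π)]
        exact le_mul_of_one_le_left (abs_nonneg _) hpi
    _ ≤ _ := by
        have := abs_sub_abs_le_abs_sub (√π * ∫ y in (-T)..T, h y)
          (∫ y in (-T)..T, gaussianMean s h y)
        linarith

end PowerBound

section TransformBound

lemma PowerBound.abs_fejerKernel_mul_le {h ℓ : ℝ → ℝ} {C δ κ : ℝ} (hb : PowerBound h C δ ℓ)
    (hκ : 0 < κ) (hκ₁ : κ ≤ 1) (u : ℝ) :
    |fejerKernel κ u * h u| ≤
      2 * C * κ ^ (2 - δ) * ((1 + |κ * u|) ^ δ / (1 + (κ * u) ^ 2)) + κ ^ 2 * ℓ u := by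
  have hC := hb.const_nonneg
  have hδ := hb.exponent_nonneg
  have hpow : (1 + |u|) ^ δ ≤ κ ^ (-δ) * (1 + |κ * u|) ^ δ := by
    have hle : 1 + |u| ≤ κ⁻¹ * (1 + |κ * u|) := by
      rw [abs_mul, abs_of_pos hκ, mul_add, inv_mul_cancel_left₀ hκ.ne', mul_one]
      gcongr
      exact (one_le_inv₀ hκ).2 hκ₁
    calc (1 + |u|) ^ δ ≤ (κ⁻¹ * (1 + |κ * u|)) ^ δ := by gcongr
      _ = κ ^ (-δ) * (1 + |κ * u|) ^ δ := by
        rw [mul_rpow (by positivity) (by positivity), rpow_neg hκ.le, inv_rpow hκ.le]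
  rw [abs_mul, abs_of_nonneg (fejerKernel_nonneg κ u)]
  calc fejerKernel κ u * |h u|
      ≤ fejerKernel κ u * (C * (κ ^ (-δ) * (1 + |κ * u|) ^ δ) + ℓ u) := by
        gcongr
        · exact fejerKernel_nonneg κ u
        · exact (hb.abs_le u).trans (by gcongr)
    _ = fejerKernel κ u * (C * (κ ^ (-δ) * (1 + |κ * u|) ^ δ)) + fejerKernel κ u * ℓ u := by ring
    _ ≤ κ ^ 2 * (2 / (1 + (κ * u) ^ 2)) * (C * (κ ^ (-δ) * (1 + |κ * u|) ^ δ)) + κ ^ 2 * ℓ u := by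
        gcongr
        · exact fejerKernel_le_div_one_add_mul_sq κ u
        · exact hb.error_nonneg u
        · exact fejerKernel_le_sq κ u
    _ = _ := by
        rw [sub_eq_add_neg, rpow_add hκ, rpow_two]
        ring

lemma PowerBound.abs_fejerTransform_le_rpow {h ℓ : ℝ → ℝ} {C δ κ : ℝ} (hb : PowerBound h C δ ℓ)
    (hκ : 0 < κ) (hκ₁ : κ ≤ 1) :
    |fejerTransform h κ| ≤
      (2 * C * (∫ v : ℝ, (1 + |v|) ^ δ / (1 + v ^ 2)) + ∫ u, ℓ u) * κ ^ (1 - δ) := by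
  have hmain := ((integrable_one_add_abs_rpow_div_one_add_sq hb.exponent_lt_one).comp_mul_left'
    hκ.ne').const_mul (2 * C * κ ^ (2 - δ))
  have herror := hb.integrable_error.const_mul (κ ^ 2)
  have hscale := Measure.integral_comp_mul_left (fun v : ℝ ↦ (1 + |v|) ^ δ / (1 + v ^ 2)) κ
  rw [abs_of_pos (inv_pos.2 hκ), smul_eq_mul] at hscale
  have hκ_sq : κ ^ 2 ≤ κ ^ (1 - δ) := by
    rw [← rpow_two]
    exact rpow_le_rpow_of_exponent_ge hκ hκ₁ (by linarith [hb.exponent_nonneg])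
  have hκ_split : κ ^ (2 - δ) = κ ^ (1 - δ) * κ := by
    rw [← rpow_add_one hκ.ne']
    ring_nf
  calc |fejerTransform h κ|
      ≤ ∫ u, (2 * C * κ ^ (2 - δ) * ((1 + |κ * u|) ^ δ / (1 + (κ * u) ^ 2)) + κ ^ 2 * ℓ u) :=
        norm_integral_le_of_norm_le (f := fun u ↦ fejerKernel κ u * h u) (hmain.add herror)
          (.of_forall (hb.abs_fejerKernel_mul_le hκ hκ₁))
    _ = 2 * C * κ ^ (1 - δ) * (∫ v : ℝ, (1 + |v|) ^ δ / (1 + v ^ 2)) + κ ^ 2 * ∫ u, ℓ u := by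
        rw [integral_add hmain herror, integral_const_mul, integral_const_mul, hscale, hκ_split]
        field_simp
    _ ≤ 2 * C * κ ^ (1 - δ) * (∫ v : ℝ, (1 + |v|) ^ δ / (1 + v ^ 2)) +
          κ ^ (1 - δ) * ∫ u, ℓ u := by
        gcongr
        exact hb.integral_error_nonneg
    _ = _ := by ring

lemma integral_Ioi_rpow_mul_exp_neg_mul_sq_eq {s : ℝ} (hs : 0 < s) (q : ℝ) :
    ∫ κ in Ioi (0 : ℝ), κ ^ q * exp (-(s ^ 2 / 2) * κ ^ 2) =
      s ^ (-(q + 1)) * ∫ x in Ioi (0 : ℝ), x ^ q * exp (-(1 / 2) * x ^ 2) := by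
  have hscale := integral_comp_mul_left_Ioi
    (fun x : ℝ ↦ x ^ q * exp (-(1 / 2) * x ^ 2)) 0 hs
  have hcongr : ∫ x in Ioi (0 : ℝ), (s * x) ^ q * exp (-(1 / 2) * (s * x) ^ 2) =
      s ^ q * ∫ κ in Ioi (0 : ℝ), κ ^ q * exp (-(s ^ 2 / 2) * κ ^ 2) := by
    rw [← integral_const_mul]
    refine setIntegral_congr_fun measurableSet_Ioi fun x hx ↦ ?_
    rw [mul_rpow hs.le (le_of_lt hx), mul_assoc]
    ring_nf
  rw [hcongr, mul_zero, smul_eq_mul] at hscale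
  rw [neg_add, rpow_add hs, rpow_neg_one, mul_assoc, ← hscale, rpow_neg hs.le,
    inv_mul_cancel_left₀ (rpow_pos_of_pos hs q).ne']

variable {F : ℝ → ℝ} {a b M c s κ₀ κ₁ : ℝ}

lemma abs_mul_exp_neg_sq_le_of_three_ranges (hs : 1 ≤ s) (hκ₀ : 0 ≤ κ₀) (ha : 0 ≤ a) (hb : 0 ≤ b)
    (hM : 0 ≤ M) (hsmall : ∀ κ, 0 < κ → κ ≤ κ₁ → |F κ| ≤ a)
    (hmiddle : ∀ κ, κ₁ ≤ κ → κ ≤ κ₀ → |F κ| ≤ b * κ ^ (1 + c))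
    (hlarge : ∀ κ, κ₀ ≤ κ → |F κ| ≤ M * (1 + κ ^ 2)) {κ : ℝ} (hκ : 0 < κ) :
    |F κ| * exp (-(s ^ 2 / 2) * κ ^ 2) ≤
      (Ioc 0 κ₁).indicator (fun _ ↦ a) κ + b * (κ ^ (1 + c) * exp (-(s ^ 2 / 2) * κ ^ 2)) +
      M * exp (-((s * κ₀) ^ 2 / 4)) * ((1 + κ ^ 2) * exp (-(1 / 4) * κ ^ 2)) := by
  have hsmall_nonneg : 0 ≤ (Ioc 0 κ₁).indicator (fun _ ↦ a) κ :=
    indicator_nonneg (fun _ _ ↦ ha) κ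
  have hmiddle_nonneg : 0 ≤ b * (κ ^ (1 + c) * exp (-(s ^ 2 / 2) * κ ^ 2)) := by positivity
  have hlarge_nonneg : 0 ≤
      M * exp (-((s * κ₀) ^ 2 / 4)) * ((1 + κ ^ 2) * exp (-(1 / 4) * κ ^ 2)) := by positivity
  rcases le_total κ κ₁ with hκκ₁ | hκκ₁
  · have hexp : exp (-(s ^ 2 / 2) * κ ^ 2) ≤ 1 :=
      exp_le_one_iff.2 (mul_nonpos_of_nonpos_of_nonneg (by linarith [sq_nonneg s]) (sq_nonneg κ))
    have hF : |F κ| * exp (-(s ^ 2 / 2) * κ ^ 2) ≤ a * 1 := by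
      gcongr
      exact hsmall κ hκ hκκ₁
    rw [indicator_of_mem (mem_Ioc.2 ⟨hκ, hκκ₁⟩)]
    linarith
  rcases le_total κ κ₀ with hκκ₀ | hκκ₀
  · have hF : |F κ| * exp (-(s ^ 2 / 2) * κ ^ 2) ≤
        b * κ ^ (1 + c) * exp (-(s ^ 2 / 2) * κ ^ 2) := by
      gcongr
      exact hmiddle κ hκκ₁ hκκ₀
    linarith
  · have hexp : exp (-(s ^ 2 / 2) * κ ^ 2) ≤
        exp (-((s * κ₀) ^ 2 / 4)) * exp (-(1 / 4) * κ ^ 2) := by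
      rw [← exp_add, exp_le_exp]
      have hsκ₀ : (s * κ₀) ^ 2 ≤ s ^ 2 * κ ^ 2 := by rw [mul_pow]; gcongr
      have hsκ : κ ^ 2 ≤ s ^ 2 * κ ^ 2 :=
        le_mul_of_one_le_left (sq_nonneg κ) (one_le_pow₀ hs)
      linarith
    have hF : |F κ| * exp (-(s ^ 2 / 2) * κ ^ 2) ≤
        M * (1 + κ ^ 2) * (exp (-((s * κ₀) ^ 2 / 4)) * exp (-(1 / 4) * κ ^ 2)) := by
      gcongr
      exact hlarge κ hκκ₀
    linarith

lemma integral_Ioi_abs_mul_exp_neg_sq_le_of_three_ranges (hc : -2 < c) (hs : 1 ≤ s) (hκ₀ : 0 ≤ κ₀)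
    (hκ₁ : 0 ≤ κ₁) (ha : 0 ≤ a) (hb : 0 ≤ b) (hM : 0 ≤ M)
    (hsmall : ∀ κ, 0 < κ → κ ≤ κ₁ → |F κ| ≤ a)
    (hmiddle : ∀ κ, κ₁ ≤ κ → κ ≤ κ₀ → |F κ| ≤ b * κ ^ (1 + c))
    (hlarge : ∀ κ, κ₀ ≤ κ → |F κ| ≤ M * (1 + κ ^ 2)) :
    ∫ κ in Ioi 0, |F κ| * exp (-(s ^ 2 / 2) * κ ^ 2) ≤
      κ₁ * a + b * (s ^ (-(2 + c)) * ∫ x in Ioi (0 : ℝ), x ^ (1 + c) * exp (-(1 / 2) * x ^ 2)) +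
      M * exp (-((s * κ₀) ^ 2 / 4)) *
        ∫ κ in Ioi (0 : ℝ), (1 + κ ^ 2) * exp (-(1 / 4) * κ ^ 2) := by
  have hs₀ : 0 < s := by linarith
  have hint_small : IntegrableOn ((Ioc 0 κ₁).indicator fun _ ↦ a) (Ioi 0) :=
    ((integrable_indicator_iff measurableSet_Ioc).2 (integrableOn_const (by simp))).integrableOn
  have hint_middle := (integrableOn_rpow_mul_exp_neg_mul_sq (b := s ^ 2 / 2) (s := 1 + c)
    (by positivity) (by linarith)).const_mul b
  have hint_large := ((integrable_one_add_sq_mul_exp_neg_mul_sq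
    (b := 1 / 4) (by norm_num)).integrableOn (s := Ioi 0)).const_mul
      (M * exp (-((s * κ₀) ^ 2 / 4)))
  have hsmall_eq : ∫ κ in Ioi 0, (Ioc 0 κ₁).indicator (fun _ ↦ a) κ = κ₁ * a := by
    rw [setIntegral_indicator measurableSet_Ioc, inter_eq_right.2 Ioc_subset_Ioi_self,
      setIntegral_const, volume_real_Ioc_of_le hκ₁, sub_zero, smul_eq_mul]
  calc ∫ κ in Ioi 0, |F κ| * exp (-(s ^ 2 / 2) * κ ^ 2)
      ≤ ∫ κ in Ioi 0, ((Ioc 0 κ₁).indicator (fun _ ↦ a) κ +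
          b * (κ ^ (1 + c) * exp (-(s ^ 2 / 2) * κ ^ 2)) +
          M * exp (-((s * κ₀) ^ 2 / 4)) * ((1 + κ ^ 2) * exp (-(1 / 4) * κ ^ 2))) := by
        refine integral_mono_of_nonneg (.of_forall fun κ ↦ by positivity)
          ((hint_small.add hint_middle).add hint_large) ?_
        filter_upwards [ae_restrict_mem measurableSet_Ioi] with κ hκ
        exact abs_mul_exp_neg_sq_le_of_three_ranges hs hκ₀ ha hb hM hsmall hmiddle hlarge hκ
    _ = _ := by
        rw [integral_add (hint_small.fun_add hint_middle) hint_large,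
          integral_add hint_small hint_middle, integral_const_mul, integral_const_mul, hsmall_eq,
          integral_Ioi_rpow_mul_exp_neg_mul_sq_eq hs₀, show 1 + c + 1 = 2 + c by ring]

end TransformBound

section ParameterChoice

variable {T Y a b c c₁ c₂ s δ ε η θ p : ℝ}

lemma rpow_rpow_one_add_le (hY : 0 ≤ Y) (ha : 0 < a) (hYa : 1 ≤ Y ^ a) (hη : a * η ≤ ε) :
    (Y ^ a) ^ (1 + η) ≤ Y ^ (a + ε) := by
  have hY₁ : 1 ≤ Y := by
    by_contra! hlt
    exact hYa.not_gt (rpow_lt_one hY hlt ha)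
  rw [← rpow_mul hY]
  exact rpow_le_rpow_of_exponent_le hY₁ (by linarith)

lemma max_rpow_mul_rpow_le (hT : 1 ≤ T) (hY : 0 ≤ Y) (ha₀ : 0 < a) (ha₁ : a ≤ 1) (hθ₀ : 0 < θ)
    (hθ₁ : θ ≤ 1) (hδ : 0 ≤ δ) (hδε : δ ≤ θ * ε) :
    max (T ^ θ) (Y ^ a) * T ^ δ ≤ Y ^ (a + ε) + T ^ (θ + ε) := by
  have hT₀ : 0 < T := by linarith
  have hδε' : δ / θ ≤ ε := (div_le_iff₀' hθ₀).2 hδε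
  have hδθ : 0 ≤ δ / θ := by positivity
  rcases le_total (Y ^ a) (T ^ θ) with hle | hle
  · rw [max_eq_left hle, ← rpow_add hT₀]
    refine le_add_of_nonneg_of_le (by positivity) (rpow_le_rpow_of_exponent_le hT ?_)
    nlinarith
  · have hYa : 1 ≤ Y ^ a := (one_le_rpow hT hθ₀.le).trans hle
    rw [max_eq_right hle]
    refine le_add_of_le_of_nonneg ?_ (by positivity)
    calc Y ^ a * T ^ δ = Y ^ a * (T ^ θ) ^ (δ / θ) := by
          rw [← rpow_mul hT₀.le, mul_div_cancel₀ _ hθ₀.ne']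
      _ ≤ Y ^ a * (Y ^ a) ^ (δ / θ) := by gcongr
      _ = (Y ^ a) ^ (1 + δ / θ) := by rw [rpow_one_add' (by positivity) (by positivity)]
      _ ≤ Y ^ (a + ε) := rpow_rpow_one_add_le hY ha₀ hYa (by nlinarith)

lemma mul_rpow_one_sub_le (hY : 0 ≤ Y) (hp : 0 < p) (hs : 0 < s) (hYs : Y ^ (1 / p) ≤ s) :
    Y * s ^ (1 - p) ≤ s := by
  have hYp : Y ≤ s ^ p := by
    rwa [one_div, rpow_inv_le_iff_of_pos hY hs.le hp] at hYs
  calc Y * s ^ (1 - p) ≤ s ^ p * s ^ (1 - p) := by gcongr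
    _ = s := by rw [← rpow_add hs, add_sub_cancel, rpow_one]

lemma exists_pow_mul_exp_neg_le {r : ℝ} (n : ℕ) (hb : 0 < b) (hr : 0 < r) :
    ∃ K, 0 ≤ K ∧ ∀ T x : ℝ, 1 ≤ T → T ^ b ≤ x → T ^ n * exp (-(r * x)) ≤ K := by
  obtain ⟨m, hm⟩ := exists_nat_ge (n / b)
  refine ⟨m.factorial / r ^ m, by positivity, fun T x hT hx ↦ ?_⟩
  have hT₀ : 0 < T := by linarith
  have hx₀ : 0 ≤ x := (rpow_nonneg hT₀.le b).trans hx
  have hpow : T ^ n ≤ x ^ m := by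
    calc T ^ n = T ^ (n : ℝ) := (rpow_natCast T n).symm
      _ ≤ T ^ (b * m) := rpow_le_rpow_of_exponent_le hT ((div_le_iff₀' hb).1 hm)
      _ = (T ^ b) ^ m := by rw [rpow_mul hT₀.le, rpow_natCast]
      _ ≤ x ^ m := by gcongr
  have hexp := pow_div_factorial_le_exp (r * x) (by positivity) m
  rw [div_le_iff₀ (by positivity), mul_pow] at hexp
  rw [exp_neg, ← div_eq_mul_inv, div_le_div_iff₀ (exp_pos _) (by positivity)]
  calc T ^ n * r ^ m ≤ x ^ m * r ^ m := by gcongr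
    _ = r ^ m * x ^ m := mul_comm _ _
    _ ≤ exp (r * x) * m.factorial := hexp
    _ = m.factorial * exp (r * x) := mul_comm _ _

lemma pow_three_mul_rpow_rpow_le (hT : 1 ≤ T) (hδ : δ * (1 + c₁) ≤ ε) :
    T ^ 3 * (T ^ (-(1 + c₁))) ^ (2 - δ) ≤ T ^ (1 - 2 * c₁ + ε) := by
  have hT₀ : 0 < T := by linarith
  rw [← rpow_mul hT₀.le, ← rpow_natCast, ← rpow_add hT₀]
  refine rpow_le_rpow_of_exponent_le hT ?_
  push_cast
  linarith

lemma rpow_le_mul_rpow_sq (hT : 0 < T) (hs : T ^ (1 - c₂ / 4) ≤ s) :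
    T ^ (3 * c₂ / 2) ≤ (s * T ^ (-(1 - c₂))) ^ 2 := by
  calc T ^ (3 * c₂ / 2) = (T ^ (1 - c₂ / 4) * T ^ (-(1 - c₂))) ^ 2 := by
        rw [← rpow_add hT, ← rpow_natCast, ← rpow_mul hT.le]
        push_cast
        ring_nf
    _ ≤ _ := by gcongr

lemma exists_smoothing_scale (hc : -2 < c) (hc₂₀ : 0 < c₂) (hc₂₄ : c₂ < 4) (hδ₀ : 0 ≤ δ)
    (hδ₁ : δ * (1 + c₁) ≤ ε) (hδ₂ : δ ≤ (1 - c₂ / 4) * ε) :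
    ∃ K, 0 ≤ K ∧ ∀ T G : ℝ, 1 ≤ T → 0 ≤ G → (T ^ 3 * G) ^ (1 / (3 + c)) ≤ T →
      ∃ s, 1 ≤ s ∧ s ≤ T ∧
        s * T ^ δ + T ^ 3 * ((T ^ (-(1 + c₁))) ^ (2 - δ) + G * s ^ (-(2 + c)) +
          exp (-((s * T ^ (-(1 - c₂))) ^ 2 / 4))) ≤
        K * ((T ^ 3 * G) ^ (1 / (3 + c) + ε) + T ^ (1 - 2 * c₁ + ε) + T ^ (1 - c₂ / 4 + ε)) := by
  obtain ⟨K, hK₀, hK⟩ := exists_pow_mul_exp_neg_le 3 (b := 3 * c₂ / 2) (r := 1 / 4)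
    (by positivity) (by norm_num)
  refine ⟨2 + K, by positivity, fun T G hT hG hGT ↦ ?_⟩
  set Y := T ^ 3 * G
  -- `s = Y ^ (1 / (3 + c))` balances `s` against `Y * s ^ (-(2 + c))`; the lower bound
  -- `T ^ (1 - c₂ / 4)` makes the exponential negligible.
  set s := max (T ^ (1 - c₂ / 4)) (Y ^ (1 / (3 + c)))
  have hT₀ : 0 < T := by linarith
  have hY : 0 ≤ Y := by positivity
  have hε : 0 ≤ ε := nonneg_of_mul_nonneg_right (hδ₀.trans hδ₂) (by linarith)
  have hs₁ : 1 ≤ s := (one_le_rpow hT (by linarith)).trans (le_max_left _ _)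
  have hsT : s ≤ T := max_le (rpow_le_self_of_one_le hT (by linarith)) hGT
  refine ⟨s, hs₁, hsT, ?_⟩
  have hsmooth : s * T ^ δ ≤ Y ^ (1 / (3 + c) + ε) + T ^ (1 - c₂ / 4 + ε) :=
    max_rpow_mul_rpow_le hT hY (one_div_pos.2 (by linarith))
      ((div_le_one (by linarith)).2 (by linarith)) (by linarith) (by linarith) hδ₀ hδ₂
  have hmiddle : T ^ 3 * (G * s ^ (-(2 + c))) ≤ s * T ^ δ := by
    rw [← mul_assoc, show -(2 + c) = 1 - (3 + c) by ring]
    exact (mul_rpow_one_sub_le hY (by linarith) (by linarith) (le_max_right _ _)).trans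
      (le_mul_of_one_le_right (by linarith) (one_le_rpow hT hδ₀))
  have hsmall := pow_three_mul_rpow_rpow_le hT hδ₁
  have hlarge : T ^ 3 * exp (-((s * T ^ (-(1 - c₂))) ^ 2 / 4)) ≤ K := by
    rw [div_eq_inv_mul, ← one_div]
    exact hK T _ hT (rpow_le_mul_rpow_sq hT₀ (le_max_left _ _))
  have hone : 1 ≤ T ^ (1 - c₂ / 4 + ε) := one_le_rpow hT (by linarith)
  have hYε : 0 ≤ Y ^ (1 / (3 + c) + ε) := by positivity
  have hTε : 0 ≤ T ^ (1 - 2 * c₁ + ε) := by positivity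
  nlinarith

end ParameterChoice

namespace PowerBound

variable {h ℓ : ℝ → ℝ} {C c δ : ℝ}

lemma abs_integral_le_rpow (hb : PowerBound h C δ ℓ) {T : ℝ} (hT : 1 ≤ T) :
    |∫ y in (-T)..T, h y| ≤ (4 * C + ∫ u, ℓ u) * T ^ (1 + δ) := by
  have hT₀ : 0 < T := by linarith
  have hC := hb.const_nonneg
  have hδ := hb.exponent_nonneg
  have hℓ := hb.integral_error_nonneg
  have hpow : (1 + T) ^ δ ≤ 2 * T ^ δ := by
    calc (1 + T) ^ δ ≤ (2 * T) ^ δ := by gcongr; linarith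
      _ = 2 ^ δ * T ^ δ := mul_rpow (by norm_num) hT₀.le
      _ ≤ 2 * T ^ δ := by
        gcongr
        exact rpow_le_self_of_one_le (by norm_num) hb.exponent_lt_one.le
  have hone : 1 ≤ T ^ (1 + δ) := one_le_rpow hT (by linarith)
  calc |∫ y in (-T)..T, h y| ≤ |T - -T| * (C * (1 + T) ^ δ) + ∫ u, ℓ u :=
        hb.abs_intervalIntegral_le (by rw [abs_neg, abs_of_pos hT₀]) (abs_of_pos hT₀).le
    _ = 2 * T * (C * (1 + T) ^ δ) + ∫ u, ℓ u := by
        rw [sub_neg_eq_add, ← two_mul, abs_of_pos (by positivity)]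
    _ ≤ 2 * T * (C * (2 * T ^ δ)) + (∫ u, ℓ u) * T ^ (1 + δ) := by
        gcongr
        exact le_mul_of_one_le_right hℓ hone
    _ = _ := by
        rw [rpow_one_add' hT₀.le (by linarith)]
        ring

lemma exists_integral_abs_fejerTransform_mul_exp_le (hb : PowerBound h C δ ℓ) (hc : -2 < c) :
    ∃ K, 0 ≤ K ∧ ∀ s κ₀ κ₁ G : ℝ, 1 ≤ s → 0 ≤ κ₀ → 0 < κ₁ → κ₁ ≤ 1 → 0 ≤ G →
      (∀ κ, κ₁ ≤ κ → κ ≤ κ₀ → |fejerTransform h κ| ≤ G * κ ^ (1 + c)) →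
      ∫ κ in Ioi 0, |fejerTransform h κ| * exp (-(s ^ 2 / 2) * κ ^ 2) ≤
        K * (κ₁ ^ (2 - δ) + G * s ^ (-(2 + c)) + exp (-((s * κ₀) ^ 2 / 4))) := by
  set M₁ := 2 * C * (∫ v : ℝ, (1 + |v|) ^ δ / (1 + v ^ 2)) + ∫ u, ℓ u
  set M₂ := ∫ x in Ioi (0 : ℝ), x ^ (1 + c) * exp (-(1 / 2) * x ^ 2)
  set M₃ := 2 * ∫ u, |h u / (1 + u ^ 2)|
  set M₄ := ∫ κ in Ioi (0 : ℝ), (1 + κ ^ 2) * exp (-(1 / 4) * κ ^ 2)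
  have hM₁ : 0 ≤ M₁ := add_nonneg (mul_nonneg (mul_nonneg two_pos.le hb.const_nonneg)
    (integral_nonneg fun _ ↦ by positivity)) hb.integral_error_nonneg
  have hM₂ : 0 ≤ M₂ := setIntegral_nonneg measurableSet_Ioi fun x (hx : 0 < x) ↦ by positivity
  have hM₃ : 0 ≤ M₃ := by positivity
  have hM₃₄ : 0 ≤ M₃ * M₄ := mul_nonneg hM₃ (integral_nonneg fun _ ↦ by positivity)
  refine ⟨M₁ + M₂ + M₃ * M₄, by positivity, fun s κ₀ κ₁ G hs hκ₀ hκ₁ hκ₁_le hG hmiddle ↦ ?_⟩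
  have hsmall (κ : ℝ) (hκ : 0 < κ) (hκκ₁ : κ ≤ κ₁) :
      |fejerTransform h κ| ≤ M₁ * κ₁ ^ (1 - δ) := by
    refine (hb.abs_fejerTransform_le_rpow hκ (hκκ₁.trans hκ₁_le)).trans ?_
    have := hb.exponent_lt_one
    gcongr
  calc ∫ κ in Ioi 0, |fejerTransform h κ| * exp (-(s ^ 2 / 2) * κ ^ 2)
      ≤ κ₁ * (M₁ * κ₁ ^ (1 - δ)) + G * (s ^ (-(2 + c)) * M₂) +
          M₃ * exp (-((s * κ₀) ^ 2 / 4)) * M₄ :=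
        integral_Ioi_abs_mul_exp_neg_sq_le_of_three_ranges hc hs hκ₀ hκ₁.le (by positivity) hG hM₃
          hsmall hmiddle
          fun κ _ ↦ abs_fejerTransform_le_mul_one_add_sq hb.integrable_div_one_add_sq κ
    _ = M₁ * κ₁ ^ (2 - δ) + M₂ * (G * s ^ (-(2 + c))) +
          M₃ * M₄ * exp (-((s * κ₀) ^ 2 / 4)) := by
        rw [show 2 - δ = 1 + (1 - δ) by ring, rpow_add hκ₁ 1, rpow_one]
        ring
    _ ≤ (M₁ + M₂ + M₃ * M₄) * κ₁ ^ (2 - δ) + (M₁ + M₂ + M₃ * M₄) * (G * s ^ (-(2 + c))) +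
          (M₁ + M₂ + M₃ * M₄) * exp (-((s * κ₀) ^ 2 / 4)) := by
        gcongr <;> linarith
    _ = _ := by ring

lemma exists_abs_integral_le_of_scale (hb : PowerBound h C δ ℓ) (hc : -2 < c) :
    ∃ K, 0 ≤ K ∧ ∀ T s κ₀ κ₁ G : ℝ, 1 ≤ s → s ≤ T → 0 ≤ κ₀ → 0 < κ₁ → κ₁ ≤ 1 → 0 ≤ G →
      (∀ κ, κ₁ ≤ κ → κ ≤ κ₀ → |fejerTransform h κ| ≤ G * κ ^ (1 + c)) →
      |∫ y in (-T)..T, h y| ≤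
        K * (s * T ^ δ + T ^ 3 * (κ₁ ^ (2 - δ) + G * s ^ (-(2 + c)) +
          exp (-((s * κ₀) ^ 2 / 4)))) := by
  obtain ⟨K, hK₀, hK⟩ := hb.exists_integral_abs_fejerTransform_mul_exp_le hc
  set M₁ := 8 * C * ∫ z : ℝ, (1 + z ^ 2) * exp (-1 * z ^ 2)
  set M₂ := 2 * (∫ u, ℓ u) * √π
  have hM₁ : 0 ≤ M₁ := mul_nonneg (mul_nonneg (by norm_num) hb.const_nonneg)
    (integral_nonneg fun _ ↦ by positivity)
  have hM₂ : 0 ≤ M₂ := by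
    have := hb.integral_error_nonneg
    positivity
  refine ⟨M₁ + M₂ + 32 * K, by positivity, fun T s κ₀ κ₁ G hs hsT hκ₀ hκ₁ hκ₁_le hG hmiddle ↦ ?_⟩
  have hs₀ : 0 < s := by linarith
  have hT : 1 ≤ T := hs.trans hsT
  have hscale : 1 ≤ s * T ^ δ :=
    one_le_mul_of_one_le_of_one_le hs (one_le_rpow hT hb.exponent_nonneg)
  set R := κ₁ ^ (2 - δ) + G * s ^ (-(2 + c)) + exp (-((s * κ₀) ^ 2 / 4))
  have hR : 0 ≤ T ^ 3 * R := by positivity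
  calc |∫ y in (-T)..T, h y|
      ≤ M₁ * (s * T ^ δ) + M₂ +
          32 * T ^ 3 * ∫ κ in Ioi 0, |fejerTransform h κ| * exp (-(s ^ 2 / 2) * κ ^ 2) :=
        (hb.abs_integral_le_fejerTransform hs₀ hsT hT).trans_eq (by simp only [M₁, M₂]; ring)
    _ ≤ M₁ * (s * T ^ δ) + M₂ * (s * T ^ δ) + 32 * T ^ 3 * (K * R) := by
        gcongr
        · exact le_mul_of_one_le_right hM₂ hscale
        · exact hK s κ₀ κ₁ G hs hκ₀ hκ₁ hκ₁_le hG hmiddle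
    _ = (M₁ + M₂) * (s * T ^ δ) + 32 * K * (T ^ 3 * R) := by ring
    _ ≤ (M₁ + M₂ + 32 * K) * (s * T ^ δ + T ^ 3 * R) := by
        linarith [mul_nonneg hK₀ (zero_le_one.trans hscale), mul_nonneg hM₁ hR, mul_nonneg hM₂ hR]

lemma exists_abs_integral_le_of_fejerTransform_le (hb : PowerBound h C δ ℓ) {c₁ c₂ ε : ℝ}
    (hc : -2 < c) (hc₁ : -1 ≤ c₁) (hc₂₀ : 0 < c₂) (hc₂₄ : c₂ < 4) (hδ₁ : δ * (1 + c₁) ≤ ε)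
    (hδ₂ : δ ≤ (1 - c₂ / 4) * ε) :
    ∃ K, 0 ≤ K ∧ ∀ T G : ℝ, 1 ≤ T → 0 ≤ G →
      (∀ κ, T ^ (-(1 + c₁)) ≤ κ → κ ≤ T ^ (-(1 - c₂)) →
        |fejerTransform h κ| ≤ G * κ ^ (1 + c)) →
      |∫ y in (-T)..T, h y| ≤
        K * ((T ^ 3 * G) ^ (1 / (3 + c) + ε) + T ^ (1 - 2 * c₁ + ε) + T ^ (1 - c₂ / 4 + ε)) := by
  obtain ⟨K₁, hK₁₀, hK₁⟩ := hb.exists_abs_integral_le_of_scale hc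
  obtain ⟨K₂, hK₂₀, hK₂⟩ :=
    exists_smoothing_scale hc hc₂₀ hc₂₄ hb.exponent_nonneg hδ₁ hδ₂
  set K₃ := 4 * C + ∫ u, ℓ u
  have hK₃₀ : 0 ≤ K₃ := by linarith [hb.const_nonneg, hb.integral_error_nonneg]
  refine ⟨K₁ * K₂ + K₃, by positivity, fun T G hT hG hmiddle ↦ ?_⟩
  set Y := T ^ 3 * G
  have hT₀ : 0 < T := by linarith
  have hY : 0 ≤ Y := by positivity
  set E := Y ^ (1 / (3 + c) + ε) + T ^ (1 - 2 * c₁ + ε) + T ^ (1 - c₂ / 4 + ε)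
  have hE : 0 ≤ E := by positivity
  rcases le_or_gt (Y ^ (1 / (3 + c))) T with hYT | hYT
  · obtain ⟨s, hs, hsT, hbalance⟩ := hK₂ T G hT hG hYT
    calc |∫ y in (-T)..T, h y| ≤ K₁ * _ := hK₁ T s _ _ G hs hsT (by positivity) (by positivity)
          (rpow_le_one_of_one_le_of_nonpos hT (by linarith)) hG hmiddle
      _ ≤ K₁ * (K₂ * E) := by gcongr
      _ ≤ (K₁ * K₂ + K₃) * E := by linarith [mul_nonneg hK₃₀ hE]
  · have hpow : T ^ (1 + δ) ≤ E := by
      have hδ := hb.exponent_nonneg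
      have hε : 0 ≤ ε := nonneg_of_mul_nonneg_right (hδ.trans hδ₂) (by linarith)
      have hδε : 1 / (3 + c) * δ ≤ ε :=
        calc 1 / (3 + c) * δ ≤ δ :=
              mul_le_of_le_one_left hδ ((div_le_one (by linarith)).2 (by linarith))
          _ ≤ (1 - c₂ / 4) * ε := hδ₂
          _ ≤ ε := mul_le_of_le_one_left hε (by linarith)
      calc T ^ (1 + δ) ≤ (Y ^ (1 / (3 + c))) ^ (1 + δ) := by gcongr
        _ ≤ Y ^ (1 / (3 + c) + ε) := rpow_rpow_one_add_le hY (one_div_pos.2 (by linarith))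
            (hT.trans hYT.le) hδε
        _ ≤ E := by linarith [rpow_nonneg hT₀.le (1 - 2 * c₁ + ε),
            rpow_nonneg hT₀.le (1 - c₂ / 4 + ε)]
    calc |∫ y in (-T)..T, h y| ≤ K₃ * T ^ (1 + δ) := hb.abs_integral_le_rpow hT
      _ ≤ K₃ * E := by gcongr
      _ ≤ (K₁ * K₂ + K₃) * E := by gcongr; linarith [mul_nonneg hK₁₀ hK₂₀]

end PowerBound

lemma exists_exponent_le {c₁ c₂ ε : ℝ} (hc₁ : -1 ≤ c₁) (hc₂ : c₂ < 4) (hε : 0 < ε) :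
    ∃ δ, 0 < δ ∧ δ < 1 ∧ δ * (1 + c₁) ≤ ε ∧ δ ≤ (1 - c₂ / 4) * ε := by
  have hpos₁ : 0 < ε / (2 + c₁) := div_pos hε (by linarith)
  have hpos₂ : 0 < (1 - c₂ / 4) * ε := mul_pos (by linarith) hε
  obtain ⟨δ, hδ₀, hδ⟩ := exists_between (lt_min (lt_min one_pos hpos₁) hpos₂)
  rw [lt_min_iff, lt_min_iff, lt_div_iff₀ (by linarith)] at hδ
  exact ⟨δ, hδ₀, hδ.1.1, by linarith, hδ.2.le⟩

lemma mul_rpow_add_le {D Z X a : ℝ} (hD : 0 ≤ D) (hZ : 0 ≤ Z) (hX : 0 ≤ X) :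
    (D * Z) ^ a + X ≤ (D ^ a + 1) * (Z ^ a + X) := by
  rw [mul_rpow hD hZ]
  have hZa : 0 ≤ Z ^ a := by positivity
  have hDX : 0 ≤ D ^ a * X := by positivity
  linarith

lemma PowerBound.fejerTransform_sub_modelDensity {f ℓ : ℝ → ℝ} {C δ B κ : ℝ}
    (hf : PowerBound f C δ ℓ) (hκ : 0 < κ) :
    fejerTransform (fun u ↦ f u - modelDensity B u) κ =
      (∫ u, (if u = 0 then κ ^ 2 else (sin (κ * u) / u) ^ 2) * f u) -
        π / 2 * κ * (log (1 / κ) + B) := by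
  obtain ⟨_, hmodel⟩ := powerBound_modelDensity B one_half_pos one_half_lt_one
  rw [fejerTransform_sub hf.measurable hmodel.measurable hf.integrable_div_one_add_sq
    hmodel.integrable_div_one_add_sq, fejerTransform_modelDensity B hκ]
  simp only [fejerTransform, fejerKernel_eq_ite]

lemma PowerBound.integral_sub_modelDensity {f ℓ : ℝ → ℝ} {C δ : ℝ} (hf : PowerBound f C δ ℓ)
    (B T : ℝ) :
    ∫ t in (-T)..T, (f t - modelDensity B t) =
      (∫ t in (-T)..T, f t) - T * (log T + (B - 2 + eulerMascheroniConstant + log 2)) := by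
  obtain ⟨_, hmodel⟩ := powerBound_modelDensity B one_half_pos one_half_lt_one
  rw [intervalIntegral.integral_sub (hf.intervalIntegrable _ _) (hmodel.intervalIntegrable _ _),
    integral_modelDensity]

end

theorem variance_lemma_converselot_general (c c₁ c₂ B D : ℝ) (hc : -2 < c) (hc₁ : -1 ≤ c₁)
    (hc₂0 : 0 < c₂) (hc₂4 : c₂ < 4) (hD : 0 ≤ D) (g : ℝ → ℝ) (hg : ∀ T : ℝ, 2 ≤ T → 0 ≤ g T)
    (f : ℝ → ℝ) (hmeas : Measurable f)
    (hgrow : ∀ ε : ℝ, 0 < ε → ∃ Cε : ℝ, ∀ t : ℝ, |f t| ≤ Cε * (1 + |t|) ^ ε) :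
    ∀ ε : ℝ, 0 < ε → ∃ C : ℝ, 0 < C ∧
      ∀ T : ℝ, 2 ≤ T →
        (∀ κ : ℝ, T ^ (-(1 + c₁)) ≤ κ → κ ≤ T ^ (-(1 - c₂)) →
          |(∫ u : ℝ, (if u = 0 then κ ^ 2 else (sin (κ * u) / u) ^ 2) * f u) -
              π / 2 * κ * (log (1 / κ) + B)| ≤ D * κ ^ (1 + c) * g T) →
        |(∫ t in (-T)..T, f t) - T * (log T + (B - 2 + eulerMascheroniConstant + log 2))|
          ≤ C * ((T ^ 3 * g T) ^ (1 / (3 + c) + ε) + T ^ (1 - 2 * c₁ + ε) +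
              T ^ (1 - c₂ / 4 + ε)) := by
  intro ε hε
  obtain ⟨δ, hδ₀, hδ₁, hδc₁, hδc₂⟩ := exists_exponent_le hc₁ hc₂4 hε
  obtain ⟨Cδ, hCδ⟩ := hgrow δ hδ₀
  have hf := PowerBound.of_forall_abs_le hmeas hδ₀.le hδ₁ hCδ
  obtain ⟨_, hmodel⟩ := powerBound_modelDensity B hδ₀ hδ₁
  obtain ⟨K, hK₀, hK⟩ :=
    (hf.sub hmodel).exists_abs_integral_le_of_fejerTransform_le hc hc₁ hc₂0 hc₂4 hδc₁ hδc₂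
  refine ⟨(K + 1) * (D ^ (1 / (3 + c) + ε) + 1), by positivity, fun T hT hasymp ↦ ?_⟩
  have hgT := hg T hT
  have hT₀ : 0 < T := by linarith
  rw [← hf.integral_sub_modelDensity, mul_assoc, add_assoc (_ ^ _)]
  calc |∫ t in (-T)..T, (f t - modelDensity B t)|
      ≤ K * ((T ^ 3 * (D * g T)) ^ (1 / (3 + c) + ε) + T ^ (1 - 2 * c₁ + ε) +
          T ^ (1 - c₂ / 4 + ε)) := by
        refine hK T (D * g T) (by linarith) (by positivity) fun κ hκ₁ hκ₀ ↦ ?_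
        rw [hf.fejerTransform_sub_modelDensity ((rpow_pos_of_pos hT₀ _).trans_le hκ₁),
          mul_right_comm D]
        exact hasymp κ hκ₁ hκ₀
    _ ≤ _ := by
        rw [mul_left_comm, add_assoc]
        exact mul_le_mul (by linarith) (mul_rpow_add_le hD (by positivity) (by positivity))
          (by positivity) (by positivity)

/-- **Lemma 2 (converse Goldston–Montgomery type).** If
`∫ (sin κu / u)² f(u) du = (π/2) κ (log(1/κ) + B) + O(κ^{1+c} g(T))`
uniformly for `T^{-(1+c₁)} ≤ κ ≤ T^{-(1-c₂)}`, then
`∫_{-T}^{T} f = T(log T + A) + O((T³g(T))^{1/(3+c)+ε} + T^{1-2c₁+ε} + T^{1-c₂/4+ε})`,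
where `A = B - 2 + γ₀ + log 2`. -/
theorem variance_lemma_converselot
    (c c₁ c₂ B D : ℝ) (hc0 : 0 < c) (hc1 : c < 1) (hc₁0 : 0 < c₁) (hc₁1 : c₁ < 1)
    (hc₂0 : 0 < c₂) (hc₂1 : c₂ < 1) (hD : 0 < D)
    (g : ℝ → ℝ) (hg : ∀ T : ℝ, 2 ≤ T → 0 ≤ g T)
    (f : ℝ → ℝ) (hmeas : Measurable f) (hnn : ∀ t, 0 ≤ f t)
    (hgrow : ∀ ε : ℝ, 0 < ε → ∃ Cε : ℝ, ∀ t : ℝ, f t ≤ Cε * (1 + |t|) ^ ε) :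
    ∀ ε : ℝ, 0 < ε → ∃ C : ℝ, 0 < C ∧
      ∀ T : ℝ, 2 ≤ T →
        (∀ κ : ℝ, T ^ (-(1 + c₁)) ≤ κ → κ ≤ T ^ (-(1 - c₂)) →
          |(∫ u : ℝ, (if u = 0 then κ ^ 2 else (Real.sin (κ * u) / u) ^ 2) * f u) -
              π / 2 * κ * (Real.log (1 / κ) + B)| ≤ D * κ ^ (1 + c) * g T) →
        |(∫ t in (-T)..T, f t) - T * (Real.log T +
            (B - 2 + Real.eulerMascheroniConstant + Real.log 2))|
          ≤ C * ((T ^ 3 * g T) ^ (1 / (3 + c) + ε) + T ^ (1 - 2 * c₁ + ε) +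
              T ^ (1 - c₂ / 4 + ε)) := by
  exact variance_lemma_converselot_general c c₁ c₂ B D (by linarith) (by linarith) hc₂0
    (by linarith) hD.le g hg f hmeas (by simpa only [abs_of_nonneg (hnn _)] using hgrow)
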